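/- arXiv:1908.03666 — 3 statements merged into one kernel-verified Lean document; each statement's English description precedes it below -/
import Mathlib

section
/- Let 0 < α < 2, let β be an arbitrary real number, and let μ satisfy πα/2 < μ < min{π, πα}. Then there exists a positive constant C (depending only on α, β, μ) such that |E_{α,β}(z)| ≤ C/(1+|z|) for all complex z with μ ≤ |arg(z)| ≤ π (including |z| = 0). -/
open Real

/-- The two-parameter Mittag-Leffler function on the complex plane,
with the convention `1/Γ = 0` at the poles of `Γ` (as in Mathlib's `Complex.Gamma`). -/
noncomputable def mittagLefflerC (α β : ℝ) (z : ℂ) : ℂ :=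
  ∑' k : ℕ, z ^ k / Complex.Gamma (((k : ℝ) * α + β : ℝ) : ℂ)

open MeasureTheory Filter Topology FourierTransform

lemma ml_laplace_int (b : ℝ) (hb : 0 < b) (p : ℂ) (hp : 0 < p.re) :
    IntegrableOn (fun t : ℝ => ((t ^ (b - 1) : ℝ) : ℂ) * Complex.exp (-(p * t))) (Set.Ioi 0) := by
  have h := Real.GammaIntegral_convergent hb
  have h2 : IntegrableOn (fun t : ℝ => t ^ (b - 1) * Real.exp (-(p.re * t))) (Set.Ioi 0) := by
    have := integrableOn_rpow_mul_exp_neg_mul_rpow (p := 1) (s := b - 1) (b := p.re)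
      (by linarith) one_pos hp
    simpa using this
  refine Integrable.mono' h2 ?_ ?_
  · apply Measurable.aestronglyMeasurable
    fun_prop
  · refine (ae_restrict_iff' measurableSet_Ioi).2 (Eventually.of_forall fun t ht => ?_)
    have ht' : 0 < t := ht
    rw [norm_mul, Complex.norm_real, Complex.norm_exp, Real.norm_of_nonneg (by positivity)]
    simp

lemma ml_laplace_diff (b : ℝ) (hb : 0 < b) (p : ℂ) (hp : 0 < p.re) :
    DifferentiableAt ℂ (fun p : ℂ => ∫ t in Set.Ioi (0 : ℝ),
      ((t ^ (b - 1) : ℝ) : ℂ) * Complex.exp (-(p * t))) p := by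
  have hs : {q : ℂ | p.re / 2 < q.re} ∈ 𝓝 p :=
    (isOpen_lt continuous_const Complex.continuous_re).mem_nhds (by simp; linarith)
  have h2 : IntegrableOn (fun t : ℝ => t ^ b * Real.exp (-(p.re / 2 * t))) (Set.Ioi 0) := by
    have := integrableOn_rpow_mul_exp_neg_mul_rpow (p := 1) (s := b) (b := p.re / 2)
      (by linarith) one_pos (by linarith)
    simpa using this
  have := hasDerivAt_integral_of_dominated_loc_of_deriv_le (𝕜 := ℂ)
    (μ := volume.restrict (Set.Ioi (0 : ℝ)))
    (F := fun p t => ((t ^ (b - 1) : ℝ) : ℂ) * Complex.exp (-(p * t)))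
    (F' := fun p t => ((t ^ (b - 1) : ℝ) : ℂ) * (Complex.exp (-(p * t)) * (-t)))
    (x₀ := p) (bound := fun t => t ^ b * Real.exp (-(p.re / 2 * t))) hs
    (Eventually.of_forall fun q => by
      apply Measurable.aestronglyMeasurable; fun_prop)
    (ml_laplace_int b hb p hp)
    (by apply Measurable.aestronglyMeasurable; fun_prop)
    ((ae_restrict_iff' measurableSet_Ioi).2 (Eventually.of_forall fun t ht q hq => by
      have ht' : 0 < t := ht
      have hq' : p.re / 2 < q.re := hq
      rw [norm_mul, norm_mul, Complex.norm_real, Complex.norm_exp,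
        Real.norm_of_nonneg (by positivity), norm_neg, Complex.norm_real,
        Real.norm_of_nonneg ht'.le]
      have e : t ^ b = t ^ (b - 1) * t := by
        rw [Real.rpow_sub_one ht'.ne']; field_simp
      rw [e]
      have : Real.exp (-(q * t)).re ≤ Real.exp (-(p.re / 2 * t)) := by
        apply Real.exp_le_exp.2
        simp
        nlinarith
      calc _ = t ^ (b - 1) * t * Real.exp (-(q * t)).re := by ring
        _ ≤ _ := by gcongr)) h2
    (Eventually.of_forall fun t q _ => by
      have h1 : HasDerivAt (fun q : ℂ => -(q * t)) (-(t : ℂ)) q := by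
        simpa using! ((hasDerivAt_id q).mul_const (t : ℂ)).neg
      exact (h1.cexp).const_mul _)
  exact this.2.differentiableAt

lemma ml_laplace (b : ℝ) (hb : 0 < b) (p : ℂ) (hp : 0 < p.re) :
    ∫ t in Set.Ioi (0 : ℝ), ((t ^ (b - 1) : ℝ) : ℂ) * Complex.exp (-(p * t))
      = p ^ (-(b : ℂ)) * Complex.Gamma b := by
  have hU : IsOpen {q : ℂ | 0 < q.re} := isOpen_lt continuous_const Complex.continuous_re
  have hA : AnalyticOnNhd ℂ (fun p : ℂ => ∫ t in Set.Ioi (0 : ℝ),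
      ((t ^ (b - 1) : ℝ) : ℂ) * Complex.exp (-(p * t))) {q : ℂ | 0 < q.re} :=
    DifferentiableOn.analyticOnNhd
      (fun q hq => (ml_laplace_diff b hb q hq).differentiableWithinAt) hU
  have hB : AnalyticOnNhd ℂ (fun p : ℂ => p ^ (-(b : ℂ)) * Complex.Gamma b) {q : ℂ | 0 < q.re} := by
    refine DifferentiableOn.analyticOnNhd (fun q hq => DifferentiableAt.differentiableWithinAt ?_) hU
    have : q ∈ Complex.slitPlane := Or.inl hq
    exact (differentiableAt_id.cpow_const this).mul_const _
  have hreal : ∀ r : ℝ, 0 < r → ∫ t in Set.Ioi (0 : ℝ), ((t ^ (b - 1) : ℝ) : ℂ) *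
      Complex.exp (-((r : ℂ) * t)) = (r : ℂ) ^ (-(b : ℂ)) * Complex.Gamma b := by
    intro r hr
    have h := Complex.integral_cpow_mul_exp_neg_mul_Ioi (a := b) (r := r) (by simpa using hb) hr
    rw [one_div, Complex.inv_cpow _ _ (by
      rw [Complex.arg_ofReal_of_nonneg hr.le]; exact Real.pi_pos.ne), ← Complex.cpow_neg] at h
    rw [← h]
    refine setIntegral_congr_fun measurableSet_Ioi fun t ht => ?_
    have ht' : (0 : ℝ) < t := ht
    rw [Complex.ofReal_cpow ht'.le]
    push_cast
    rfl
  have hconn : IsPreconnected {q : ℂ | 0 < q.re} := (convex_halfSpace_re_gt 0).isPreconnected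
  refine hA.eqOn_of_preconnected_of_frequently_eq hB hconn (z₀ := 1) (by simp) ?_ hp
  have hseq : Tendsto (fun n : ℕ => ((1 + 1 / ((n : ℝ) + 1) : ℝ) : ℂ)) atTop (𝓝[≠] 1) := by
    refine tendsto_nhdsWithin_iff.2 ⟨?_, Eventually.of_forall fun n => ?_⟩
    · have : Tendsto (fun n : ℕ => (1 + 1 / ((n : ℝ) + 1) : ℝ)) atTop (𝓝 (1 + 0)) :=
        tendsto_const_nhds.add tendsto_one_div_add_atTop_nhds_zero_nat
      have h3 := (Complex.continuous_ofReal.tendsto _).comp this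
      simpa [Function.comp_def] using h3
    · simp only [Set.mem_compl_iff, Set.mem_singleton_iff]
      intro h
      have h' : (1 + 1 / ((n : ℝ) + 1) : ℝ) = 1 := by exact_mod_cast h
      have : (0 : ℝ) < 1 / ((n : ℝ) + 1) := by positivity
      linarith
  exact hseq.frequently (Frequently.of_forall fun n => hreal _ (by positivity))

lemma ml_norm_cpow (s : ℂ) (hs : 0 < s.re) (c : ℝ) : ‖s ^ (c : ℂ)‖ = ‖s‖ ^ c := by
  have : s ≠ 0 := by rintro rfl; simp at hs
  rw [Complex.norm_cpow_of_ne_zero this]; simp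

lemma ml_norm_line (y : ℝ) : ‖(1 + y * Complex.I : ℂ)‖ = (1 + y ^ 2) ^ (1 / 2 : ℝ) := by
  rw [← Real.sqrt_eq_rpow, Complex.norm_eq_sqrt_sq_add_sq]; simp

lemma ml_one_le_norm_line (y : ℝ) : 1 ≤ ‖(1 + y * Complex.I : ℂ)‖ := by
  have := Complex.abs_re_le_norm (1 + y * Complex.I : ℂ)
  simpa using this

lemma ml_int_line (p : ℝ) (hp : 1 < p) :
    Integrable (fun y : ℝ => ‖(1 + y * Complex.I : ℂ)‖ ^ (-p)) := by
  have h := integrable_rpow_neg_one_add_norm_sq (E := ℝ) (μ := volume) (r := p) (by simpa using hp)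
  refine h.congr (Eventually.of_forall fun y => ?_)
  simp only [ml_norm_line]
  rw [← Real.rpow_mul (by positivity)]
  simp only [Real.norm_eq_abs, sq_abs]
  congr 1; ring

lemma ml_cont_cpow (c : ℂ) : Continuous fun y : ℝ => (1 + y * Complex.I : ℂ) ^ c := by
  refine Continuous.cpow (by fun_prop) continuous_const fun y => ?_
  left; simp

lemma ml_hankel (b : ℝ) (hb : 1 < b) :
    ∫ y : ℝ, Complex.exp (1 + y * Complex.I) * (1 + y * Complex.I : ℂ) ^ (-(b : ℂ))
      = 2 * π / Complex.Gamma b := by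
  have hb0 : 0 < b := by linarith
  set f : ℝ → ℂ := Set.indicator (Set.Ioi 0)
    (fun t : ℝ => ((t ^ (b - 1) : ℝ) : ℂ) * Complex.exp (-((1 : ℂ) * t))) with hf
  have hfi : Integrable f :=
    (integrable_indicator_iff measurableSet_Ioi).2 (ml_laplace_int b hb0 1 (by simp))
  have hF : 𝓕 f = fun ξ : ℝ =>
      (1 + ((2 * π * ξ : ℝ) : ℂ) * Complex.I : ℂ) ^ (-(b : ℂ)) * Complex.Gamma b := by
    funext ξ
    rw [Real.fourier_real_eq_integral_exp_smul, ← ml_laplace b hb0 _ (by simp),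
      ← integral_indicator measurableSet_Ioi]
    congr 1
    funext t
    by_cases ht : t ∈ Set.Ioi (0 : ℝ)
    · simp only [hf, Set.indicator_of_mem ht, smul_eq_mul]
      rw [mul_left_comm, ← Complex.exp_add]
      congr 2
      push_cast; ring
    · simp only [hf, Set.indicator_of_notMem ht, smul_zero]
  have hFi : Integrable (𝓕 f) := by
    rw [hF]
    refine Integrable.mul_const ?_ _
    have h1 : Integrable (fun y : ℝ => (1 + y * Complex.I : ℂ) ^ (-(b : ℂ))) := by
      refine (ml_int_line b hb).mono' (ml_cont_cpow _).aestronglyMeasurable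
        (Eventually.of_forall fun y => ?_)
      have := ml_norm_cpow (1 + y * Complex.I) (by simp) (-b)
      push_cast at this
      rw [this]
    exact h1.comp_mul_left' (g := fun y : ℝ => (1 + y * Complex.I : ℂ) ^ (-(b : ℂ)))
      (R := 2 * π) (by positivity)
  have hcont : ContinuousAt f 1 := by
    have : (fun t : ℝ => ((t ^ (b - 1) : ℝ) : ℂ) * Complex.exp (-((1 : ℂ) * t))) =ᶠ[𝓝 1] f := by
      filter_upwards [Ioi_mem_nhds (show (0 : ℝ) < 1 by norm_num)] with t ht
      simp only [hf, Set.indicator_of_mem ht]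
    refine ContinuousAt.congr ?_ this
    refine ContinuousAt.mul ?_ (by fun_prop)
    exact Complex.continuous_ofReal.continuousAt.comp
      (Real.continuousAt_rpow_const _ _ (Or.inl one_ne_zero))
  have hinv := hfi.fourierInv_fourier_eq hFi hcont
  rw [Real.fourierInv_eq', hF] at hinv
  have hf1 : f 1 = Complex.exp (-1) := by
    simp [hf]
  rw [hf1] at hinv
  have hsub := Measure.integral_comp_mul_left
    (fun y : ℝ => Complex.exp (1 + y * Complex.I) * (1 + y * Complex.I : ℂ) ^ (-(b : ℂ))) (2 * π)
  have hG : Complex.Gamma b ≠ 0 := Complex.Gamma_ne_zero_of_re_pos (by simpa using hb0)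
  have key : (∫ x : ℝ, Complex.exp (1 + ((2 * π * x : ℝ) : ℂ) * Complex.I) *
      (1 + ((2 * π * x : ℝ) : ℂ) * Complex.I : ℂ) ^ (-(b : ℂ))) * Complex.Gamma b = 1 := by
    have e1 : (1 : ℂ) = Complex.exp 1 * Complex.exp (-1) := by rw [← Complex.exp_add]; simp
    refine Eq.trans ?_ e1.symm
    rw [← hinv, ← integral_const_mul, ← integral_mul_const]
    congr 1
    funext x
    rw [Complex.exp_add]
    simp only [smul_eq_mul]
    simp
    ring
  rw [hsub] at key
  rw [eq_div_iff hG]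
  rw [abs_of_pos (by positivity), Complex.real_smul] at key
  have hpi : (π : ℂ) ≠ 0 := by exact_mod_cast Real.pi_ne_zero
  push_cast at key
  field_simp at key
  rw [key]

lemma ml_gamma_lower (b c : ℝ) (hb : 1 ≤ b) (hc : 0 < c) :
    c ^ (b - 1) * Real.exp (-c) ≤ Real.Gamma b := by
  have hI := Real.GammaIntegral_convergent (show 0 < b by linarith)
  rw [Real.Gamma_eq_integral (by linarith), ← integral_exp_neg_Ioi c, ← integral_const_mul]
  refine le_trans ?_ (setIntegral_mono_set hI ?_ (Set.Ioi_subset_Ioi hc.le).eventuallyLE)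
  · refine setIntegral_mono_on ((integrableOn_exp_neg_Ioi c).const_mul _)
      (hI.mono_set (Set.Ioi_subset_Ioi hc.le)) measurableSet_Ioi fun x hx => ?_
    have hx' : c < x := hx
    rw [mul_comm]
    gcongr
  · refine (ae_restrict_iff' measurableSet_Ioi).2 (Eventually.of_forall fun t ht => ?_)
    have ht' : (0 : ℝ) < t := ht
    simp only [Pi.zero_apply]; positivity

lemma ml_summable (α β : ℝ) (hα : 0 < α) (R : ℝ) (hR : 0 < R) :
    Summable fun k : ℕ => R ^ k * ‖(Complex.Gamma (((k : ℝ) * α + β : ℝ) : ℂ))⁻¹‖ := by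
  set c : ℝ := (2 * R) ^ (1 / α) with hc
  have hc0 : 0 < c := by positivity
  have hcα : c ^ α = 2 * R := by
    rw [hc, ← Real.rpow_mul (by positivity)]; field_simp; simp
  have hg : Summable fun k : ℕ => (Real.exp c * c ^ (1 - β)) * (1 / 2 : ℝ) ^ k :=
    (summable_geometric_of_lt_one (by norm_num) (by norm_num)).mul_left _
  refine Summable.of_norm_bounded_eventually_nat hg ?_
  obtain ⟨N, hN⟩ := exists_nat_ge ((1 - β) / α)
  filter_upwards [eventually_ge_atTop N] with k hk
  have hk' : (1 - β) / α ≤ k := hN.trans (by exact_mod_cast hk)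
  rw [div_le_iff₀ hα] at hk'
  have hlow := ml_gamma_lower ((k : ℝ) * α + β) c (by linarith) hc0
  rw [Complex.Gamma_ofReal, norm_mul, norm_norm, norm_inv, Complex.norm_real, norm_pow,
    Real.norm_of_nonneg hR.le, Real.norm_of_nonneg (by
      refine le_trans ?_ hlow; positivity)]
  have : (Real.Gamma ((k : ℝ) * α + β))⁻¹ ≤ (c ^ ((k : ℝ) * α + β - 1) * Real.exp (-c))⁻¹ :=
    inv_anti₀ (by positivity) hlow
  refine (mul_le_mul_of_nonneg_left this (by positivity)).trans (le_of_eq ?_)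
  have e : c ^ ((k : ℝ) * α + β - 1) = (2 * R) ^ k * (c ^ (1 - β))⁻¹ := by
    rw [← Real.rpow_neg hc0.le, ← hcα, ← Real.rpow_natCast, ← Real.rpow_mul hc0.le,
      ← Real.rpow_add hc0]
    congr 1; ring
  rw [e, Real.exp_neg, mul_pow]
  have h1 : c ^ (1 - β) ≠ 0 := by positivity
  field_simp
  rw [← mul_pow]; norm_num

lemma ml_term_bound (α β : ℝ) (R : ℝ) (k : ℕ) (w : ℂ) (hw : w ∈ Metric.ball (0 : ℂ) R) :
    ‖w ^ k / Complex.Gamma (((k : ℝ) * α + β : ℝ) : ℂ)‖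
      ≤ R ^ k * ‖(Complex.Gamma (((k : ℝ) * α + β : ℝ) : ℂ))⁻¹‖ := by
  rw [div_eq_mul_inv, norm_mul, norm_pow]
  have : ‖w‖ < R := by simpa using hw
  gcongr

lemma ml_hasSum (α β : ℝ) (hα : 0 < α) (z : ℂ) :
    HasSum (fun k : ℕ => z ^ k / Complex.Gamma (((k : ℝ) * α + β : ℝ) : ℂ))
      (mittagLefflerC α β z) := by
  refine Summable.hasSum ?_
  refine Summable.of_norm_bounded (ml_summable α β hα (‖z‖ + 1) (by positivity)) fun k => ?_
  exact ml_term_bound α β _ k z (by simp)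

lemma ml_differentiable (α β : ℝ) (hα : 0 < α) : Differentiable ℂ (mittagLefflerC α β) := by
  intro z
  have h := Complex.differentiableOn_tsum_of_summable_norm
    (F := fun (k : ℕ) (z : ℂ) => z ^ k / Complex.Gamma (((k : ℝ) * α + β : ℝ) : ℂ))
    (ml_summable α β hα (‖z‖ + 1) (by positivity))
    (fun k => by fun_prop) (Metric.isOpen_ball (x := (0 : ℂ)) (ε := ‖z‖ + 1))
    (fun k w hw => ml_term_bound α β _ k w hw)
  exact h.differentiableAt (Metric.isOpen_ball.mem_nhds (by simp))

lemma ml_lower_step (α β : ℝ) (hα : 0 < α) (z : ℂ) :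
    mittagLefflerC α β z = β * mittagLefflerC α (β + 1) z
      + α * (z * deriv (mittagLefflerC α (β + 1)) z) := by
  have h := Complex.hasSum_deriv_of_summable_norm
    (F := fun (k : ℕ) (z : ℂ) => z ^ k / Complex.Gamma (((k : ℝ) * α + (β + 1) : ℝ) : ℂ))
    (ml_summable α (β + 1) hα (‖z‖ + 1) (by positivity))
    (fun k => by fun_prop) (Metric.isOpen_ball (x := (0 : ℂ)) (ε := ‖z‖ + 1))
    (fun k w hw => ml_term_bound α (β + 1) _ k w hw) (z := z) (by simp)
  have h2 := ((ml_hasSum α (β + 1) hα z).mul_left (β : ℂ)).add ((h.mul_left z).mul_left (α : ℂ))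
  refine (ml_hasSum α β hα z).unique ?_
  refine Eq.mp (congrArg (fun f => HasSum f _) (funext fun k => ?_)) h2
  symm
  rw [deriv_div_const, deriv_pow_field]
  have e : (((k : ℝ) * α + β : ℝ) : ℂ) + 1 = (((k : ℝ) * α + (β + 1) : ℝ) : ℂ) := by
    push_cast; ring
  rw [div_eq_mul_inv, Complex.one_div_Gamma_eq_self_mul_one_div_Gamma_add_one, e]
  rcases k with _ | k
  · simp
  · simp only [Nat.add_sub_cancel, pow_succ]
    push_cast
    ring
lemma ml_cos (μ A ψ φ : ℝ) (hAμ : A < μ) (hμ : μ ≤ π) (hψ : μ ≤ |ψ|) (hψ2 : |ψ| ≤ π)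
    (hφ : |φ| ≤ A) : Real.cos (ψ - φ) ≤ Real.cos (μ - A) := by
  have hA : 0 ≤ A := (abs_nonneg _).trans hφ
  rw [← Real.cos_abs (ψ - φ)]
  have h1 : μ - A ≤ |ψ - φ| := by
    have := abs_sub_abs_le_abs_sub ψ φ; linarith
  have h2 : |ψ - φ| ≤ 2 * π - (μ - A) := by
    have := abs_sub ψ φ; linarith
  rcases le_total |ψ - φ| π with h | h
  · exact Real.cos_le_cos_of_nonneg_of_le_pi (by linarith) h h1
  · rw [← Real.cos_two_pi_sub]
    exact Real.cos_le_cos_of_nonneg_of_le_pi (by linarith) (by linarith) (by linarith)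

lemma ml_arg_of_sector (μ : ℝ) (hμ : μ ≤ π) (z : ℂ) (hz0 : z ≠ 0)
    (hz : z.re ≤ Real.cos μ * ‖z‖) : μ ≤ |z.arg| := by
  have hn : 0 < ‖z‖ := norm_pos_iff.2 hz0
  have h1 : Real.cos |z.arg| ≤ Real.cos μ := by
    rw [Real.cos_abs, Complex.cos_arg hz0, div_le_iff₀ hn]; exact hz
  by_contra h
  push Not at h
  exact absurd (Real.cos_lt_cos_of_nonneg_of_le_pi (abs_nonneg _) hμ h) (not_lt.2 h1)

lemma ml_sector_of_arg (μ : ℝ) (hμ0 : 0 ≤ μ) (z : ℂ) (hz : μ ≤ |z.arg|) :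
    z.re ≤ Real.cos μ * ‖z‖ := by
  rcases eq_or_ne z 0 with rfl | hz0
  · simp
  have hn : 0 < ‖z‖ := norm_pos_iff.2 hz0
  rw [← div_le_iff₀ hn, ← Complex.cos_arg hz0, ← Real.cos_abs]
  exact Real.cos_le_cos_of_nonneg_of_le_pi hμ0 (Complex.abs_arg_le_pi z) hz

lemma ml_denom (α μ : ℝ) (hα : 0 < α) (hμ1 : π * α / 2 < μ) (hμ : μ ≤ π) :
    ∃ m : ℝ, 0 < m ∧ ∀ z : ℂ, z.re ≤ Real.cos μ * ‖z‖ → ∀ s : ℂ, 0 < s.re →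
      m * (1 + ‖z‖ * ‖s‖ ^ (-α)) ≤ ‖1 - z * s ^ (-(α : ℂ))‖ := by
  have hpi := Real.pi_pos
  have hA0 : 0 < π * α / 2 := by positivity
  set k := Real.cos (μ - π * α / 2) with hk
  have hk1 : k < 1 := by
    rw [hk, ← Real.cos_zero]
    exact Real.cos_lt_cos_of_nonneg_of_le_pi le_rfl (by linarith) (by linarith)
  have hk2 : -1 ≤ k := Real.neg_one_le_cos _
  refine ⟨√((1 - k) / 2), Real.sqrt_pos.2 (by linarith), fun z hz s hs => ?_⟩
  have hs0 : s ≠ 0 := by rintro rfl; simp at hs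
  set w := z * s ^ (-(α : ℂ)) with hw
  have hvn : ‖s ^ (-(α : ℂ))‖ = ‖s‖ ^ (-α) := by
    have := Complex.norm_cpow_of_ne_zero hs0 (-(α : ℂ))
    simpa using this
  have hwn : ‖w‖ = ‖z‖ * ‖s‖ ^ (-α) := by rw [hw, norm_mul, hvn]
  have hre : w.re ≤ k * ‖w‖ := by
    rcases eq_or_ne z 0 with rfl | hz0
    · simp [hw]
    have hψ := ml_arg_of_sector μ hμ z hz0 hz
    have hφ : |α * s.arg| ≤ π * α / 2 := by
      rw [abs_mul, abs_of_pos hα]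
      have := (Complex.abs_arg_lt_pi_div_two_iff.2 (Or.inl hs)).le
      nlinarith
    have hcos := ml_cos μ (π * α / 2) z.arg (α * s.arg) hμ1 hμ hψ (Complex.abs_arg_le_pi z) hφ
    have hws : w = ((‖w‖ : ℝ) : ℂ) * Complex.exp (((z.arg - α * s.arg : ℝ) : ℂ) * Complex.I) := by
      rw [hwn]
      conv_lhs => rw [hw, ← Complex.norm_mul_exp_arg_mul_I z, Complex.cpow_def_of_ne_zero hs0,
        Complex.log]
      rw [Real.rpow_def_of_pos (norm_pos_iff.2 hs0)]
      push_cast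
      rw [mul_assoc, mul_assoc, ← Complex.exp_add, ← Complex.exp_add]
      congr 2; ring
    have hwre : w.re = ‖w‖ * Real.cos (z.arg - α * s.arg) := by
      conv_lhs => rw [hws]
      rw [Complex.re_ofReal_mul, Complex.exp_ofReal_mul_I_re]
    rw [hwre, mul_comm]
    exact mul_le_mul_of_nonneg_right hcos (norm_nonneg _)
  rw [← hwn]
  have hsq : ‖1 - w‖ ^ 2 = 1 + ‖w‖ ^ 2 - 2 * w.re := by
    rw [Complex.sq_norm, Complex.sq_norm, Complex.normSq_apply, Complex.normSq_apply]
    simp; ring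
  refine le_of_sq_le_sq ?_ (norm_nonneg _)
  rw [mul_pow, Real.sq_sqrt (by linarith), hsq]
  nlinarith [sq_nonneg (1 - ‖w‖), norm_nonneg w, mul_nonneg (show 0 ≤ 1 + k by linarith) (sq_nonneg (1 - ‖w‖))]

lemma ml_perturb (k k' c : ℝ) (hk' : |k'| ≤ 1) (hc : c ≤ (k' - k) / 2) (z w : ℂ)
    (hz : z.re ≤ k * ‖z‖) (hw : ‖w - z‖ ≤ c * ‖z‖) : w.re ≤ k' * ‖w‖ := by
  have h1 : w.re ≤ z.re + c * ‖z‖ := by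
    have := (Complex.re_le_norm (w - z)).trans hw
    simp at this; linarith
  have h2 : |‖w‖ - ‖z‖| ≤ c * ‖z‖ := (abs_norm_sub_norm_le w z).trans hw
  have h3 : |k' * (‖w‖ - ‖z‖)| ≤ c * ‖z‖ := by
    rw [abs_mul]
    calc _ ≤ 1 * |‖w‖ - ‖z‖| := by gcongr
      _ ≤ _ := by linarith
  have h4 := (abs_le.1 h3).1
  nlinarith [norm_nonneg z]

/-- The integrand of the Laplace inversion representation on the line `Re s = 1`. -/
noncomputable def mlF (α β : ℝ) (z : ℂ) (y : ℝ) : ℂ :=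
  Complex.exp (1 + y * Complex.I) * (1 + y * Complex.I : ℂ) ^ (-(β : ℂ)) /
    (1 - z * (1 + y * Complex.I : ℂ) ^ (-(α : ℂ)))

lemma ml_norm_line_cpow (c : ℝ) (y : ℝ) :
    ‖(1 + y * Complex.I : ℂ) ^ (-(c : ℂ))‖ = ‖(1 + y * Complex.I : ℂ)‖ ^ (-c) := by
  have := ml_norm_cpow (1 + y * Complex.I) (by simp) (-c)
  push_cast at this
  exact this

lemma ml_norm_line_cpow_le_one (c : ℝ) (hc : 0 ≤ c) (y : ℝ) :
    ‖(1 + y * Complex.I : ℂ) ^ (-(c : ℂ))‖ ≤ 1 := by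
  rw [ml_norm_line_cpow]
  exact Real.rpow_le_one_of_one_le_of_nonpos (ml_one_le_norm_line y) (by linarith)

lemma ml_norm_exp_line (y : ℝ) : ‖Complex.exp (1 + y * Complex.I)‖ = Real.exp 1 := by
  rw [Complex.norm_exp]; simp

lemma ml_repr_small (α β : ℝ) (hα : 0 < α) (hβ : 1 < β) (z : ℂ) (hz : ‖z‖ < 1) :
    ∫ y, mlF α β z y = 2 * π * mittagLefflerC α β z := by
  set g : ℕ → ℝ → ℂ := fun k y => z ^ k * (Complex.exp (1 + y * Complex.I) *
    (1 + y * Complex.I : ℂ) ^ (-(((k : ℝ) * α + β : ℝ) : ℂ))) with hg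
  have hb : ∀ k : ℕ, 1 < (k : ℝ) * α + β := fun k => by
    have : 0 ≤ (k : ℝ) * α := by positivity
    linarith
  have hbound : ∀ k y, ‖g k y‖ ≤ ‖z‖ ^ k * (Real.exp 1 * ‖(1 + y * Complex.I : ℂ)‖ ^ (-β)) := by
    intro k y
    simp only [hg]
    rw [norm_mul, norm_mul, norm_pow, ml_norm_exp_line, ml_norm_line_cpow]
    gcongr
    · exact ml_one_le_norm_line y
    · have : 0 ≤ (k : ℝ) * α := by positivity
      linarith
  have hmeas : ∀ k, AEStronglyMeasurable (g k) volume := fun k => by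
    refine Continuous.aestronglyMeasurable ?_
    have := ml_cont_cpow (-(((k : ℝ) * α + β : ℝ) : ℂ))
    fun_prop
  have hbi : ∀ k : ℕ, Integrable
      (fun y : ℝ => ‖z‖ ^ k * (Real.exp 1 * ‖(1 + y * Complex.I : ℂ)‖ ^ (-β))) :=
    fun k => ((ml_int_line β hβ).const_mul _).const_mul _
  have hint : ∀ k, Integrable (g k) := fun k =>
    (hbi k).mono' (hmeas k) (Eventually.of_forall (hbound k))
  have hsum : Summable fun k => ∫ y, ‖g k y‖ := by
    refine Summable.of_nonneg_of_le (fun k => integral_nonneg fun y => norm_nonneg _)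
      (fun k => integral_mono (hint k).norm (hbi k) (hbound k)) ?_
    simp_rw [integral_const_mul]
    exact (summable_geometric_of_lt_one (norm_nonneg _) hz).mul_right _
  have h := hasSum_integral_of_summable_integral_norm hint hsum
  have h1 : ∀ k : ℕ, ∫ y, g k y
      = 2 * π * (z ^ k / Complex.Gamma (((k : ℝ) * α + β : ℝ) : ℂ)) := by
    intro k
    simp only [hg]
    rw [integral_const_mul, ml_hankel _ (hb k)]
    ring
  simp_rw [h1] at h
  have h2 := (ml_hasSum α β hα z).mul_left (2 * π : ℂ)
  rw [← h.unique h2]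
  congr 1
  funext y
  have hs0 : (1 + y * Complex.I : ℂ) ≠ 0 := by
    intro h0
    have := ml_one_le_norm_line y
    rw [h0] at this; simp at this; linarith
  have hgk : ∀ k, g k y = (Complex.exp (1 + y * Complex.I) *
      (1 + y * Complex.I : ℂ) ^ (-(β : ℂ))) * (z * (1 + y * Complex.I : ℂ) ^ (-(α : ℂ))) ^ k := by
    intro k
    simp only [hg]
    have : (-(((k : ℝ) * α + β : ℝ) : ℂ)) = -(β : ℂ) + (k : ℂ) * (-(α : ℂ)) := by push_cast; ring
    rw [this, Complex.cpow_add _ _ hs0, Complex.cpow_nat_mul, mul_pow]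
    ring
  simp_rw [hgk]
  rw [tsum_mul_left, tsum_geometric_of_norm_lt_one, mlF, div_eq_mul_inv]
  rw [norm_mul]
  have := ml_norm_line_cpow_le_one α hα.le y
  nlinarith [norm_nonneg z]

lemma ml_meas (α β : ℝ) (z : ℂ) : AEStronglyMeasurable (mlF α β z) volume := by
  have h1 := (ml_cont_cpow (-(β : ℂ))).measurable
  have h2 := (ml_cont_cpow (-(α : ℂ))).measurable
  refine Measurable.aestronglyMeasurable ?_
  unfold mlF
  fun_prop

lemma ml_F_bound (α β m : ℝ) (z : ℂ) (hm : 0 < m) (y : ℝ)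
    (h : m * (1 + ‖z‖ * ‖(1 + y * Complex.I : ℂ)‖ ^ (-α)) ≤
      ‖1 - z * (1 + y * Complex.I : ℂ) ^ (-(α : ℂ))‖) :
    ‖mlF α β z y‖ ≤ Real.exp 1 * ‖(1 + y * Complex.I : ℂ)‖ ^ (-β) /
      (m * (1 + ‖z‖ * ‖(1 + y * Complex.I : ℂ)‖ ^ (-α))) := by
  rw [mlF, norm_div, norm_mul, ml_norm_exp_line, ml_norm_line_cpow]
  gcongr

lemma ml_diffG (α β : ℝ) (hα : 0 < α) (hα2 : α < 2) (hβ : 1 < β) (z : ℂ)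
    (hz : z.re < Real.cos (π * α / 2) * ‖z‖) :
    DifferentiableAt ℂ (fun z => ∫ y, mlF α β z y) z := by
  have hpi := Real.pi_pos
  have hA0 : 0 < π * α / 2 := by positivity
  have hz0 : z ≠ 0 := by rintro rfl; simp at hz
  have hμ0 : π * α / 2 < |z.arg| := by
    by_contra h
    push Not at h
    have h1 := Real.cos_le_cos_of_nonneg_of_le_pi (abs_nonneg _) (by nlinarith) h
    rw [Real.cos_abs, Complex.cos_arg hz0, le_div_iff₀ (norm_pos_iff.2 hz0)] at h1
    linarith
  have hargpi := Complex.abs_arg_le_pi z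
  set μ := (|z.arg| + π * α / 2) / 2 with hμ
  have hμ1 : π * α / 2 < μ := by rw [hμ]; linarith
  have hμ2 : μ < |z.arg| := by rw [hμ]; linarith
  obtain ⟨m, hm, hden⟩ := ml_denom α μ hα hμ1 (by linarith)
  have hcos : Real.cos |z.arg| < Real.cos μ :=
    Real.cos_lt_cos_of_nonneg_of_le_pi (by linarith) hargpi hμ2
  have hsec : z.re ≤ Real.cos |z.arg| * ‖z‖ := ml_sector_of_arg _ (abs_nonneg _) z le_rfl
  set c := (Real.cos μ - Real.cos |z.arg|) / 2 with hc
  have hc0 : 0 < c := by rw [hc]; linarith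
  have hball : ∀ w ∈ Metric.ball z (c * ‖z‖), w.re ≤ Real.cos μ * ‖w‖ := by
    intro w hw
    exact ml_perturb _ _ c (Real.abs_cos_le_one μ) le_rfl z w hsec
      (by rw [← dist_eq_norm]; exact (Metric.mem_ball.1 hw).le)
  have hnb : Metric.ball z (c * ‖z‖) ∈ 𝓝 z :=
    Metric.ball_mem_nhds _ (by have := norm_pos_iff.2 hz0; positivity)
  have hzb : z ∈ Metric.ball z (c * ‖z‖) := mem_of_mem_nhds hnb
  have hdm : ∀ w ∈ Metric.ball z (c * ‖z‖), ∀ y : ℝ,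
      m ≤ ‖1 - w * (1 + y * Complex.I : ℂ) ^ (-(α : ℂ))‖ := by
    intro w hw y
    refine le_trans ?_ (hden w (hball w hw) (1 + y * Complex.I) (by simp))
    have : 0 ≤ ‖w‖ * ‖(1 + y * Complex.I : ℂ)‖ ^ (-α) := by positivity
    nlinarith
  have hbi := ((ml_int_line β hβ).const_mul (Real.exp 1)).div_const (m ^ 2)
  have hFint : Integrable (mlF α β z) := by
    refine (((ml_int_line β hβ).const_mul (Real.exp 1)).div_const m).mono' (ml_meas α β z)
      (Eventually.of_forall fun y => ?_)
    rw [mlF, norm_div, norm_mul, ml_norm_exp_line, ml_norm_line_cpow]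
    have := hdm z hzb y
    gcongr
  have := hasDerivAt_integral_of_dominated_loc_of_deriv_le (𝕜 := ℂ) (μ := volume)
    (F := fun z y => mlF α β z y)
    (F' := fun z y => Complex.exp (1 + y * Complex.I) * (1 + y * Complex.I : ℂ) ^ (-(β : ℂ)) *
      (1 + y * Complex.I : ℂ) ^ (-(α : ℂ)) /
      (1 - z * (1 + y * Complex.I : ℂ) ^ (-(α : ℂ))) ^ 2)
    (x₀ := z) hnb (Eventually.of_forall fun q => ml_meas α β q) hFint
    (by
      have h1 := (ml_cont_cpow (-(β : ℂ))).measurable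
      have h2 := (ml_cont_cpow (-(α : ℂ))).measurable
      refine Measurable.aestronglyMeasurable ?_
      fun_prop)
    (Eventually.of_forall fun y w hw => by
      rw [norm_div, norm_mul, norm_mul, norm_pow, ml_norm_exp_line, ml_norm_line_cpow β]
      have h1 := hdm w hw y
      have h2 := ml_norm_line_cpow_le_one α hα.le y
      have h3 : Real.exp 1 * ‖(1 + y * Complex.I : ℂ)‖ ^ (-β) *
          ‖(1 + y * Complex.I : ℂ) ^ (-(α : ℂ))‖
          ≤ Real.exp 1 * ‖(1 + y * Complex.I : ℂ)‖ ^ (-β) :=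
        mul_le_of_le_one_right (by positivity) h2
      gcongr) hbi
    (Eventually.of_forall fun y w hw => by
      have hne : 1 - w * (1 + y * Complex.I : ℂ) ^ (-(α : ℂ)) ≠ 0 := by
        rw [← norm_pos_iff]; exact hm.trans_le (hdm w hw y)
      have h1 : HasDerivAt (fun w : ℂ => 1 - w * (1 + y * Complex.I : ℂ) ^ (-(α : ℂ)))
          (-(1 + y * Complex.I : ℂ) ^ (-(α : ℂ))) w := by
        simpa using ((hasDerivAt_id w).mul_const ((1 + y * Complex.I : ℂ) ^ (-(α : ℂ)))).const_sub 1
      have h2 := (hasDerivAt_const w (Complex.exp (1 + y * Complex.I) *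
        (1 + y * Complex.I : ℂ) ^ (-(β : ℂ)))).div h1 hne
      refine h2.congr_deriv ?_
      ring)
  exact this.2.differentiableAt

lemma ml_sector_preconn (A : ℝ) (hA0 : 0 ≤ A) (hA : A < π) :
    IsPreconnected {z : ℂ | z.re < Real.cos A * ‖z‖} := by
  have himg : {z : ℂ | z.re < Real.cos A * ‖z‖} =
      (fun w : ℂ => -Complex.exp w) '' {w : ℂ | w.im ∈ Set.Ioo (-(π - A)) (π - A)} := by
    ext z
    simp only [Set.mem_ofPred_eq, Set.mem_image]
    constructor
    · intro hz
      have hz0 : z ≠ 0 := by rintro rfl; simp at hz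
      have hz0' : -z ≠ 0 := neg_ne_zero.2 hz0
      refine ⟨Complex.log (-z), ?_, by rw [Complex.exp_log hz0']; simp⟩
      rw [Complex.log_im, Set.mem_Ioo, ← abs_lt]
      by_contra h
      push Not at h
      have h1 := Real.cos_le_cos_of_nonneg_of_le_pi (by linarith) (Complex.abs_arg_le_pi (-z)) h
      rw [Real.cos_abs, Complex.cos_arg hz0', Real.cos_pi_sub,
        div_le_iff₀ (norm_pos_iff.2 hz0'), norm_neg, Complex.neg_re] at h1
      linarith
    · rintro ⟨w, hw, rfl⟩
      have hw' : |w.im| < π - A := abs_lt.2 hw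
      rw [norm_neg, Complex.norm_exp, Complex.neg_re, Complex.exp_re, ← Real.cos_abs w.im]
      have h1 := Real.cos_lt_cos_of_nonneg_of_le_pi (abs_nonneg _) (by linarith) hw'
      rw [Real.cos_pi_sub] at h1
      nlinarith [Real.exp_pos w.re]
  rw [himg]
  refine IsPreconnected.image ?_ _ (by fun_prop)
  have : Convex ℝ {w : ℂ | w.im ∈ Set.Ioo (-(π - A)) (π - A)} :=
    (convex_Ioo _ _).linear_preimage Complex.imLm
  exact this.isPreconnected

lemma ml_repr (α β : ℝ) (hα : 0 < α) (hα2 : α < 2) (hβ : 1 < β) (z : ℂ)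
    (hz : z.re < Real.cos (π * α / 2) * ‖z‖) :
    ∫ y, mlF α β z y = 2 * π * mittagLefflerC α β z := by
  have hpi := Real.pi_pos
  have hU : IsOpen {z : ℂ | z.re < Real.cos (π * α / 2) * ‖z‖} :=
    isOpen_lt Complex.continuous_re (by fun_prop)
  have hA : AnalyticOnNhd ℂ (fun z => ∫ y, mlF α β z y)
      {z : ℂ | z.re < Real.cos (π * α / 2) * ‖z‖} :=
    DifferentiableOn.analyticOnNhd
      (fun w hw => (ml_diffG α β hα hα2 hβ w hw).differentiableWithinAt) hU
  have hB : AnalyticOnNhd ℂ (fun z => 2 * π * mittagLefflerC α β z)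
      {z : ℂ | z.re < Real.cos (π * α / 2) * ‖z‖} :=
    DifferentiableOn.analyticOnNhd
      ((ml_differentiable α β hα).const_mul _).differentiableOn hU
  have hconn := ml_sector_preconn (π * α / 2) (by positivity) (by nlinarith)
  refine hA.eqOn_of_preconnected_of_eventuallyEq hB hconn (z₀ := -(1 / 2)) ?_ ?_ hz
  · have h1 := Real.cos_lt_cos_of_nonneg_of_le_pi (x := π * α / 2) (by positivity) le_rfl
      (by nlinarith)
    rw [Real.cos_pi] at h1
    simp
    linarith
  · have : Metric.ball (0 : ℂ) 1 ∈ 𝓝 (-(1 / 2) : ℂ) :=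
      Metric.isOpen_ball.mem_nhds (by simp; norm_num)
    filter_upwards [this] with w hw
    exact ml_repr_small α β hα hβ w (by simpa using hw)

lemma ml_large (α β : ℝ) (hα : 0 < α) (hα2 : α < 2) (hβ : α + 1 < β) (μ : ℝ)
    (hμ1 : π * α / 2 < μ) (hμ2 : μ ≤ π) :
    ∃ C : ℝ, ∀ z : ℂ, z.re ≤ Real.cos μ * ‖z‖ → ‖mittagLefflerC α β z‖ * ‖z‖ ≤ C := by
  have hpi := Real.pi_pos
  obtain ⟨m, hm, hden⟩ := ml_denom α μ hα hμ1 hμ2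
  have hi := ml_int_line (β - α) (by linarith)
  set J := ∫ y : ℝ, ‖(1 + y * Complex.I : ℂ)‖ ^ (-(β - α)) with hJ
  refine ⟨Real.exp 1 / m * J, fun z hz => ?_⟩
  have hJ0 : 0 ≤ J := integral_nonneg fun y => by positivity
  rcases eq_or_ne z 0 with rfl | hz0
  · simp; positivity
  have hn := norm_pos_iff.2 hz0
  have hcos : Real.cos μ < Real.cos (π * α / 2) :=
    Real.cos_lt_cos_of_nonneg_of_le_pi (by positivity) hμ2 hμ1
  have hrep := ml_repr α β hα hα2 (by linarith) z (by nlinarith)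
  have hle : ‖∫ y, mlF α β z y‖ ≤ ∫ y : ℝ, Real.exp 1 / (m * ‖z‖) *
      ‖(1 + y * Complex.I : ℂ)‖ ^ (-(β - α)) := by
    refine norm_integral_le_of_norm_le (hi.const_mul _) (Eventually.of_forall fun y => ?_)
    refine (ml_F_bound α β m z hm y (hden z hz _ (by simp))).trans ?_
    have hs : 0 < ‖(1 + y * Complex.I : ℂ)‖ := lt_of_lt_of_le one_pos (ml_one_le_norm_line y)
    have e : ‖(1 + y * Complex.I : ℂ)‖ ^ (-β) =
        ‖(1 + y * Complex.I : ℂ)‖ ^ (-(β - α)) * ‖(1 + y * Complex.I : ℂ)‖ ^ (-α) := by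
      rw [← Real.rpow_add hs]; congr 1; ring
    rw [e]
    set a := ‖(1 + y * Complex.I : ℂ)‖ ^ (-(β - α))
    have hb : 0 < ‖(1 + y * Complex.I : ℂ)‖ ^ (-α) := by positivity
    set b := ‖(1 + y * Complex.I : ℂ)‖ ^ (-α)
    have ha : 0 ≤ a := by positivity
    calc _ ≤ Real.exp 1 * (a * b) / (m * (‖z‖ * b)) := by
          gcongr; linarith
      _ = _ := by field_simp
  rw [integral_const_mul, hrep, norm_mul] at hle
  have h2 : ‖(2 * π : ℂ)‖ = 2 * π := by
    rw [norm_mul, Complex.norm_real, Real.norm_of_nonneg hpi.le]; simp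
  rw [h2] at hle
  have h3 : ‖mittagLefflerC α β z‖ ≤ 2 * π * ‖mittagLefflerC α β z‖ := by
    have := Real.pi_gt_three
    nlinarith [norm_nonneg (mittagLefflerC α β z)]
  have h4 := h3.trans hle
  calc _ ≤ Real.exp 1 / (m * ‖z‖) * J * ‖z‖ := by gcongr
    _ = _ := by field_simp

lemma ml_step (α β : ℝ) (hα : 0 < α)
    (ih : ∀ μ : ℝ, π * α / 2 < μ → μ ≤ π → ∃ C : ℝ, ∀ z : ℂ, z.re ≤ Real.cos μ * ‖z‖ →
      ‖mittagLefflerC α (β + 1) z‖ * ‖z‖ ≤ C) (μ : ℝ) (hμ1 : π * α / 2 < μ) (hμ2 : μ ≤ π) :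
    ∃ C : ℝ, ∀ z : ℂ, z.re ≤ Real.cos μ * ‖z‖ → ‖mittagLefflerC α β z‖ * ‖z‖ ≤ C := by
  have hpi := Real.pi_pos
  have hA0 : 0 < π * α / 2 := by positivity
  set ν := (μ + π * α / 2) / 2 with hν
  have hν1 : π * α / 2 < ν := by rw [hν]; linarith
  have hν2 : ν < μ := by rw [hν]; linarith
  have hcos : Real.cos μ < Real.cos ν :=
    Real.cos_lt_cos_of_nonneg_of_le_pi (by linarith) hμ2 hν2
  obtain ⟨C, hC⟩ := ih ν hν1 (by linarith)
  have hC0 : 0 ≤ C := by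
    have := hC 0 (by simp)
    simpa using this
  set c := min (1 / 2) ((Real.cos ν - Real.cos μ) / 2) with hc
  have hc0 : 0 < c := lt_min (by norm_num) (by linarith)
  have hc1 : c ≤ 1 / 2 := min_le_left _ _
  refine ⟨|β| * C + α * (2 * C / c), fun z hz => ?_⟩
  rcases eq_or_ne z 0 with rfl | hz0
  · simp; positivity
  have hn := norm_pos_iff.2 hz0
  have hderiv : ‖deriv (mittagLefflerC α (β + 1)) z‖ ≤ (2 * C / ‖z‖) / (c * ‖z‖) := by
    refine Complex.norm_deriv_le_of_forall_mem_sphere_norm_le (by positivity)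
      (ml_differentiable α (β + 1) hα).diffContOnCl fun w hw => ?_
    have hw' : ‖w - z‖ = c * ‖z‖ := by simpa [dist_eq_norm] using hw
    have h1 := hC w (ml_perturb _ _ c (Real.abs_cos_le_one ν) (min_le_right _ _) z w hz hw'.le)
    have h2 : ‖z‖ / 2 ≤ ‖w‖ := by
      have := norm_sub_norm_le z w
      rw [norm_sub_rev, hw'] at this
      nlinarith
    rw [le_div_iff₀ hn]
    nlinarith [norm_nonneg (mittagLefflerC α (β + 1) w)]
  have h0 := hC z (by nlinarith)
  rw [ml_lower_step α β hα z]
  calc _ ≤ (|β| * ‖mittagLefflerC α (β + 1) z‖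
        + α * (‖z‖ * ((2 * C / ‖z‖) / (c * ‖z‖)))) * ‖z‖ := by
        gcongr
        refine (norm_add_le _ _).trans ?_
        rw [norm_mul, norm_mul, norm_mul, Complex.norm_real, Complex.norm_real,
          Real.norm_eq_abs, Real.norm_of_nonneg hα.le]
        gcongr
    _ = |β| * (‖mittagLefflerC α (β + 1) z‖ * ‖z‖) + α * (2 * C / c) := by field_simp
    _ ≤ _ := by gcongr

lemma ml_all (α : ℝ) (hα : 0 < α) (hα2 : α < 2) (n : ℕ) : ∀ β : ℝ, α + 1 < β + n →
    ∀ μ : ℝ, π * α / 2 < μ → μ ≤ π → ∃ C : ℝ, ∀ z : ℂ, z.re ≤ Real.cos μ * ‖z‖ →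
      ‖mittagLefflerC α β z‖ * ‖z‖ ≤ C := by
  induction n with
  | zero => intro β hβ μ; exact ml_large α β hα hα2 (by simpa using hβ) μ
  | succ n ih =>
    intro β hβ
    exact ml_step α β hα (ih (β + 1) (by push_cast at hβ; linarith))

theorem mittagLefflerC_bound (α β μ : ℝ) (hα0 : 0 < α) (hα2 : α < 2)
    (hμ1 : Real.pi * α / 2 < μ) (hμ2 : μ < min Real.pi (Real.pi * α)) :
    ∃ C : ℝ, 0 < C ∧ ∀ z : ℂ, μ ≤ |z.arg| → |z.arg| ≤ Real.pi →
      ‖mittagLefflerC α β z‖ ≤ C / (1 + ‖z‖) := by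
  have hpi := Real.pi_pos
  have hA0 : 0 < π * α / 2 := by positivity
  obtain ⟨n, hn⟩ := exists_nat_gt (α + 1 - β)
  obtain ⟨C, hC⟩ := ml_all α hα0 hα2 n β (by linarith) μ hμ1 (hμ2.le.trans (min_le_left _ _))
  obtain ⟨D, hD⟩ := (isCompact_closedBall (0 : ℂ) 1).exists_bound_of_continuousOn
    (ml_differentiable α β hα0).continuous.continuousOn
  have hD0 : 0 ≤ D := (norm_nonneg _).trans (hD 0 (by simp))
  have hC0 : 0 ≤ C := by simpa using hC 0 (by simp)
  refine ⟨2 * C + 2 * D + 1, by positivity, fun z hz _ => ?_⟩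
  rw [le_div_iff₀ (by positivity)]
  have h1 := hC z (ml_sector_of_arg μ (by linarith) z hz)
  rcases le_total ‖z‖ 1 with h | h
  · have h2 := hD z (by simpa using h)
    nlinarith [norm_nonneg (mittagLefflerC α β z)]
  · nlinarith [norm_nonneg (mittagLefflerC α β z)]
end

section
/- For 0 < α ≤ 1, the function x ↦ E_{α,1}(-x) is completely monotonic on [0, ∞): for every natural number n and every x > 0, (-1)^n times the n-th derivative of x ↦ E_{α,1}(-x) evaluated at x is nonnegative, and E_{α,1}(-x) ≥ 0 for all x ≥ 0. -/
open Real

/-- The two-parameter Mittag-Leffler function (real arguments),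
with the convention `1/Γ = 0` at the poles of `Γ` (as in Mathlib's `Real.Gamma`). -/
noncomputable def mittagLeffler (α β x : ℝ) : ℝ :=
  ∑' k : ℕ, x ^ k / Real.Gamma ((k : ℝ) * α + β)

open MeasureTheory Filter Topology

/-- Exponential generating function of a sequence, at `-x`. -/
noncomputable def egfNeg (m : ℕ → ℝ) (x : ℝ) : ℝ := ∑' k : ℕ, (-x) ^ k / (k.factorial : ℝ) * m k

/-- The exponential generating function converges absolutely everywhere. -/
def EgfSummable (m : ℕ → ℝ) : Prop :=
  ∀ r : ℝ, 0 ≤ r → Summable (fun k : ℕ => r ^ k / (k.factorial : ℝ) * |m k|)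

lemma EgfSummable.shift {m : ℕ → ℝ} (h : EgfSummable m) : EgfSummable (fun k => m (k + 1)) := by
  intro r hr
  have h1 := (summable_nat_add_iff 1).2 (h (2 * (r + 1)) (by linarith))
  refine Summable.of_nonneg_of_le (fun k => by positivity) (fun k => ?_) h1
  apply mul_le_mul_of_nonneg_right _ (abs_nonneg _)
  rw [div_le_div_iff₀ (by positivity) (by positivity), Nat.factorial_succ]
  push_cast
  have h2 : ((k : ℝ) + 1) ≤ 2 ^ (k + 1) := by
    exact_mod_cast (Nat.lt_two_pow_self (n := k + 1)).le
  have h3 : r ^ k ≤ (r + 1) ^ (k + 1) := by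
    calc r ^ k ≤ (r + 1) ^ k := by gcongr; linarith
      _ ≤ (r + 1) ^ (k + 1) := pow_le_pow_right₀ (by linarith) (by omega)
  have hf : (0 : ℝ) < k.factorial := by positivity
  rw [mul_pow]
  calc r ^ k * (((k : ℝ) + 1) * k.factorial) ≤ (r + 1) ^ (k + 1) * (2 ^ (k + 1) * k.factorial) := by
        gcongr
    _ = _ := by ring

lemma EgfSummable.shift_n {m : ℕ → ℝ} (h : EgfSummable m) (n : ℕ) :
    EgfSummable (fun k => m (k + n)) := by
  induction n with
  | zero => simpa using h
  | succ n ih =>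
    have := ih.shift
    simpa [add_assoc, add_comm 1 n] using this

lemma EgfSummable.summable {m : ℕ → ℝ} (h : EgfSummable m) (x : ℝ) :
    Summable (fun k : ℕ => (-x) ^ k / (k.factorial : ℝ) * m k) := by
  refine Summable.of_norm_bounded (h |x| (abs_nonneg _)) (fun k => ?_)
  simp

lemma EgfSummable.hasDerivAt {m : ℕ → ℝ} (h : EgfSummable m) (x : ℝ) :
    HasDerivAt (egfNeg m) (-(egfNeg (fun k => m (k + 1)) x)) x := by
  set R := |x| + 1 with hR
  let g' : ℕ → ℝ → ℝ := fun k y => -((k : ℝ) * (-y) ^ (k - 1) / (k.factorial : ℝ) * m k)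
  have key : ∀ (k : ℕ) (y : ℝ), g' (k + 1) y = -((-y) ^ k / (k.factorial : ℝ) * m (k + 1)) := by
    intro k y
    simp only [g', Nat.factorial_succ]
    have hf : (k.factorial : ℝ) ≠ 0 := by positivity
    have hk : (k : ℝ) + 1 ≠ 0 := by positivity
    push_cast
    try simp only [Nat.add_sub_cancel]
    field_simp
  have hu : Summable (fun k : ℕ => (k : ℝ) * R ^ (k - 1) / (k.factorial : ℝ) * |m k|) := by
    rw [← summable_nat_add_iff 1]
    refine (h.shift R (by positivity)).congr (fun k => ?_)
    rw [Nat.factorial_succ]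
    have hf : (k.factorial : ℝ) ≠ 0 := by positivity
    have hk : (k : ℝ) + 1 ≠ 0 := by positivity
    push_cast
    try simp only [Nat.add_sub_cancel]
    field_simp
  have hx : x ∈ Metric.ball (0 : ℝ) R := by simp [hR]
  have hd := hasDerivAt_tsum_of_isPreconnected (𝕜 := ℝ) (F := ℝ)
    (g := fun k y => (-y) ^ k / (k.factorial : ℝ) * m k) (g' := g') (t := Metric.ball (0 : ℝ) R)
    (y₀ := x) (y := x) hu Metric.isOpen_ball (convex_ball _ _).isPreconnected
    (fun k y _ => by
      have := (((hasDerivAt_id y).neg.pow k).div_const (k.factorial : ℝ)).mul_const (m k)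
      refine HasDerivAt.congr_deriv this ?_
      simp [g']; ring)
    (fun k y hy => by
      simp only [g', norm_neg, norm_mul, norm_div, norm_pow, Real.norm_eq_abs, Nat.abs_cast]
      have : |y| ≤ R := by simpa using (Metric.mem_ball.1 hy).le
      gcongr)
    hx (h.summable x) hx
  have he : (∑' k, g' k x) = -(egfNeg (fun k => m (k + 1)) x) := by
    have hs : Summable (fun k => g' k x) := by
      rw [← summable_nat_add_iff 1]
      simp only [key]
      exact (h.shift.summable x).neg
    rw [hs.tsum_eq_zero_add]
    simp only [key, tsum_neg, egfNeg]
    simp [g']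
  rw [he] at hd
  exact hd

lemma EgfSummable.iteratedDeriv {m : ℕ → ℝ} (h : EgfSummable m) (n : ℕ) :
    iteratedDeriv n (egfNeg m) = fun x => (-1) ^ n * egfNeg (fun k => m (k + n)) x := by
  induction n with
  | zero => simp
  | succ n ih =>
    rw [iteratedDeriv_succ, ih]
    funext x
    have := ((h.shift_n n).hasDerivAt x).const_mul ((-1 : ℝ) ^ n)
    rw [this.deriv]
    simp only [add_assoc, add_comm 1 n]
    ring

/-- Moment sequences of finite measures on `[0,1]`. -/
def IsMom (m : ℕ → ℝ) : Prop :=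
  ∃ μ : Measure ℝ, IsFiniteMeasure μ ∧ (∀ᵐ s ∂μ, 0 ≤ s ∧ s ≤ 1) ∧ ∀ k, m k = ∫ s, s ^ k ∂μ

lemma integrable_pow_of_ae {μ : Measure ℝ} [IsFiniteMeasure μ] (h : ∀ᵐ s ∂μ, 0 ≤ s ∧ s ≤ 1)
    (k : ℕ) : Integrable (fun s : ℝ => s ^ k) μ := by
  refine Integrable.of_bound (by fun_prop) 1 ?_
  filter_upwards [h] with s hs
  rw [norm_pow, Real.norm_eq_abs, abs_of_nonneg hs.1]
  exact pow_le_one₀ hs.1 hs.2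

lemma measurableSet_unit : MeasurableSet {s : ℝ | 0 ≤ s ∧ s ≤ 1} := measurableSet_Icc

lemma IsMom.mul {m m' : ℕ → ℝ} (h : IsMom m) (h' : IsMom m') : IsMom (fun k => m k * m' k) := by
  obtain ⟨μ, hμ, hs, hm⟩ := h
  obtain ⟨ν, hν, hs', hm'⟩ := h'
  have hmeas : Measurable (fun z : ℝ × ℝ => z.1 * z.2) := by fun_prop
  refine ⟨(μ.prod ν).map (fun z => z.1 * z.2), inferInstance, ?_, fun k => ?_⟩
  · rw [ae_map_iff hmeas.aemeasurable measurableSet_unit]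
    have h1 : ∀ᵐ z ∂(μ.prod ν), 0 ≤ z.1 ∧ z.1 ≤ 1 := Measure.quasiMeasurePreserving_fst.ae hs
    have h2 : ∀ᵐ z ∂(μ.prod ν), 0 ≤ z.2 ∧ z.2 ≤ 1 := Measure.quasiMeasurePreserving_snd.ae hs'
    filter_upwards [h1, h2] with z hz1 hz2
    exact ⟨mul_nonneg hz1.1 hz2.1, mul_le_one₀ hz1.2 hz2.1 hz2.2⟩
  · rw [integral_map hmeas.aemeasurable (by fun_prop)]
    simp only [mul_pow]
    rw [integral_prod_mul (fun s : ℝ => s ^ k) (fun s : ℝ => s ^ k), hm, hm']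

lemma IsMom.comb {m m' : ℕ → ℝ} (h : IsMom m) (h' : IsMom m') {a b : ℝ} (ha : 0 ≤ a)
    (hb : 0 ≤ b) : IsMom (fun k => a * m k + b * m' k) := by
  obtain ⟨μ, hμ, hs, hm⟩ := h
  obtain ⟨ν, hν, hs', hm'⟩ := h'
  have f1 : IsFiniteMeasure (ENNReal.ofReal a • μ) := Measure.smul_finite _ ENNReal.ofReal_ne_top
  have f2 : IsFiniteMeasure (ENNReal.ofReal b • ν) := Measure.smul_finite _ ENNReal.ofReal_ne_top
  have e1 := Measure.ae_smul_measure hs (ENNReal.ofReal a)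
  have e2 := Measure.ae_smul_measure hs' (ENNReal.ofReal b)
  refine ⟨ENNReal.ofReal a • μ + ENNReal.ofReal b • ν, inferInstance, ?_, fun k => ?_⟩
  · rw [ae_add_measure_iff]
    exact ⟨e1, e2⟩
  · rw [integral_add_measure (integrable_pow_of_ae e1 k) (integrable_pow_of_ae e2 k),
      integral_smul_measure, integral_smul_measure, ENNReal.toReal_ofReal ha,
      ENNReal.toReal_ofReal hb]
    simp [hm, hm']

lemma isMom_one : IsMom (fun _ => 1) := by
  refine ⟨Measure.dirac 1, inferInstance, ?_, fun k => ?_⟩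
  · rw [ae_dirac_iff measurableSet_unit]; norm_num
  · simp

lemma isMom_frac (j : ℕ) : IsMom (fun k => ((j : ℝ) + 1) / ((j : ℝ) + 1 + k)) := by
  have hj : (0 : ℝ) < (j : ℝ) + 1 := by positivity
  have hmeas : Measurable (fun u : ℝ => u ^ (((j : ℝ) + 1)⁻¹)) := by fun_prop
  refine ⟨(volume.restrict (Set.Ioc (0 : ℝ) 1)).map (fun u : ℝ => u ^ (((j : ℝ) + 1)⁻¹)),
    inferInstance, ?_, fun k => ?_⟩
  · rw [ae_map_iff hmeas.aemeasurable measurableSet_unit]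
    filter_upwards [ae_restrict_mem measurableSet_Ioc] with u hu
    exact ⟨Real.rpow_nonneg hu.1.le _, Real.rpow_le_one hu.1.le hu.2 (by positivity)⟩
  · rw [integral_map hmeas.aemeasurable (by fun_prop)]
    have : ∫ u in Set.Ioc (0 : ℝ) 1, (u ^ (((j : ℝ) + 1)⁻¹)) ^ k
        = ∫ u in Set.Ioc (0 : ℝ) 1, u ^ (((j : ℝ) + 1)⁻¹ * k) := by
      refine setIntegral_congr_fun measurableSet_Ioc (fun u hu => ?_)
      rw [Real.rpow_mul hu.1.le, Real.rpow_natCast]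
    have hp : 0 ≤ ((j : ℝ) + 1)⁻¹ * k := by positivity
    rw [this, ← intervalIntegral.integral_of_le zero_le_one, integral_rpow (Or.inl (by linarith)),
      Real.one_rpow, Real.zero_rpow (by linarith)]
    field_simp
    ring

lemma isMom_factor {α : ℝ} (h0 : 0 < α) (h1 : α ≤ 1) (j : ℕ) :
    IsMom (fun k => (1 + k * α + j) / (1 + k + j)) := by
  have := isMom_one.comb (isMom_frac j) h0.le (sub_nonneg.2 h1)
  convert this using 2 with k
  have hj : (j : ℝ) + 1 + k ≠ 0 := by positivity
  have hj' : (1 : ℝ) + k + j ≠ 0 := by positivity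
  field_simp
  ring

lemma isMom_prod {α : ℝ} (h0 : 0 < α) (h1 : α ≤ 1) (n : ℕ) :
    IsMom (fun k => ∏ j ∈ Finset.range n, (1 + k * α + j) / (1 + k + j)) := by
  induction n with
  | zero => simpa using isMom_one
  | succ n ih =>
    simp only [Finset.prod_range_succ]
    exact ih.mul (isMom_factor h0 h1 n)

lemma IsMom.egf_nonneg {m : ℕ → ℝ} (h : IsMom m) {c : ℝ} (hc : 0 ≤ c) (p : ℕ) (x : ℝ) :
    0 ≤ egfNeg (fun k => c ^ (k + p) * m (k + p)) x := by
  obtain ⟨μ, hμ, hs, hm⟩ := h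
  let F : ℕ → ℝ → ℝ := fun k s => (-x) ^ k / (k.factorial : ℝ) * (c ^ (k + p) * s ^ (k + p))
  have hint : ∀ k, Integrable (F k) μ := fun k =>
    ((integrable_pow_of_ae hs (k + p)).const_mul _).const_mul _
  have hsum : Summable (fun k => ∫ s, ‖F k s‖ ∂μ) := by
    have hb : Summable (fun k : ℕ => (|x| * c) ^ k / (k.factorial : ℝ) * (c ^ p * μ.real Set.univ)) :=
      (Real.summable_pow_div_factorial _).mul_right _
    refine Summable.of_nonneg_of_le (fun k => by positivity) (fun k => ?_) hb
    have : ∫ s, ‖F k s‖ ∂μ ≤ ∫ s, (|x| * c) ^ k / (k.factorial : ℝ) * c ^ p ∂μ := by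
      refine integral_mono_ae (hint k).norm (integrable_const _) ?_
      filter_upwards [hs] with s hs
      simp only [F, norm_mul, norm_div, norm_pow, Real.norm_eq_abs, Nat.abs_cast, abs_neg,
        abs_of_nonneg hc, abs_of_nonneg hs.1]
      have : s ^ (k + p) ≤ 1 := pow_le_one₀ hs.1 hs.2
      calc |x| ^ k / (k.factorial : ℝ) * (c ^ (k + p) * s ^ (k + p))
          ≤ |x| ^ k / (k.factorial : ℝ) * (c ^ (k + p) * 1) := by gcongr
        _ = _ := by rw [mul_pow, pow_add]; ring
    refine this.trans (le_of_eq ?_)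
    rw [integral_const, smul_eq_mul]; ring
  have he : egfNeg (fun k => c ^ (k + p) * m (k + p)) x = ∫ s, ∑' k, F k s ∂μ := by
    rw [← integral_tsum_of_summable_integral_norm hint hsum]
    unfold egfNeg
    refine tsum_congr (fun k => ?_)
    simp only [F, hm]
    rw [integral_const_mul, integral_const_mul]
  rw [he]
  refine integral_nonneg_of_ae ?_
  filter_upwards [hs] with s hs
  have h2 : HasSum (fun k => F k s) (Real.exp (-x * (c * s)) * (c * s) ^ p) := by
    have := (NormedSpace.expSeries_div_hasSum_exp (𝔸 := ℝ) (-x * (c * s))).mul_right ((c * s) ^ p)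
    rw [← Real.exp_eq_exp_ℝ] at this
    refine this.congr_fun (fun k => ?_)
    simp only [F]
    rw [mul_pow, mul_pow, mul_pow, pow_add, pow_add]; ring
  rw [Pi.zero_apply, h2.tsum_eq]
  have := hs.1
  positivity

/-- The approximating sequences. -/
noncomputable def apx (α : ℝ) (n k : ℕ) : ℝ :=
  (((n : ℝ) + 1) ^ (1 - α)) ^ k * ∏ j ∈ Finset.range (n + 2), (1 + k * α + j) / (1 + k + j)

lemma apx_nonneg {α : ℝ} (h0 : 0 < α) (n k : ℕ) : 0 ≤ apx α n k := by
  unfold apx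
  refine mul_nonneg (by positivity) (Finset.prod_nonneg (fun j _ => by positivity))

lemma apx_mono {α : ℝ} (h0 : 0 < α) (h1 : α ≤ 1) (k : ℕ) : Monotone (fun n => apx α n k) := by
  refine monotone_nat_of_le_succ (fun n => ?_)
  unfold apx
  rw [Finset.prod_range_succ (n := n + 2)]
  have hP : 0 ≤ ∏ j ∈ Finset.range (n + 2), (1 + k * α + j) / (1 + (k : ℝ) + j) :=
    Finset.prod_nonneg (fun j _ => by positivity)
  set P := ∏ j ∈ Finset.range (n + 2), (1 + k * α + j) / (1 + (k : ℝ) + j)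
  set c : ℝ := k * (1 - α) with hc
  have hc0 : 0 ≤ c := mul_nonneg (by positivity) (by linarith)
  have e : ∀ y : ℝ, 0 < y → (y ^ (1 - α)) ^ k = y ^ c := by
    intro y hy
    rw [← Real.rpow_natCast, ← Real.rpow_mul hy.le, hc, mul_comm]
  have hn : (0 : ℝ) < (n : ℝ) + 1 := by positivity
  rw [e _ hn, e _ (by positivity)]
  push_cast
  set a : ℝ := (n : ℝ) + 1 with ha
  -- ratio bound
  have hr : a ^ c * (1 + c / (a + 2)) ≤ (a + 1) ^ c := by
    have hq : (a + 1) = a * ((a + 1) / a) := by field_simp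
    rw [hq, Real.mul_rpow hn.le (by positivity)]
    refine mul_le_mul_of_nonneg_left ?_ (by positivity)
    rw [Real.rpow_def_of_pos (by positivity)]
    have hl := Real.one_sub_inv_le_log_of_pos (x := (a + 1) / a) (by positivity)
    have hl2 : 1 / (a + 2) ≤ 1 - ((a + 1) / a)⁻¹ := by
      have : 1 - ((a + 1) / a)⁻¹ = 1 / (a + 1) := by field_simp; ring
      rw [this]
      exact one_div_le_one_div_of_le (by positivity) (by linarith)
    have h3 := Real.add_one_le_exp (Real.log ((a + 1) / a) * c)
    have h4 : c / (a + 2) ≤ Real.log ((a + 1) / a) * c := by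
      rw [div_eq_mul_one_div, mul_comm]
      exact mul_le_mul_of_nonneg_right (hl2.trans hl) hc0
    linarith
  have hf : 1 ≤ (1 + c / (a + 2)) * ((1 + k * α + (n + 2)) / (1 + (k : ℝ) + (n + 2))) := by
    have en : (n : ℝ) = a - 1 := by rw [ha]; ring
    rw [en]
    have hd : (0 : ℝ) < 1 + k + (a - 1 + 2) := by
      have : (0 : ℝ) ≤ k := by positivity
      linarith
    rw [← mul_div_assoc, le_div_iff₀ hd, one_mul]
    have hk : 0 ≤ (k : ℝ) * α := by positivity
    have : (1 + c / (a + 2)) * (1 + k * α + (a - 1 + 2))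
        = (1 + k + (a - 1 + 2)) + c * (k * α) / (a + 2) := by
      rw [hc]; field_simp; ring
    rw [this]
    have : 0 ≤ c * (k * α) / (a + 2) := by positivity
    linarith
  have hQ : 0 ≤ (1 + k * α + (n + 2)) / (1 + (k : ℝ) + (n + 2)) := by positivity
  calc a ^ c * P = a ^ c * P * 1 := by ring
    _ ≤ a ^ c * P * ((1 + c / (a + 2)) * ((1 + k * α + (n + 2)) / (1 + (k : ℝ) + (n + 2)))) := by
        refine mul_le_mul_of_nonneg_left hf (by positivity)
    _ = (a ^ c * (1 + c / (a + 2))) * (P * ((1 + k * α + (n + 2)) / (1 + (k : ℝ) + (n + 2)))) := by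
        ring
    _ ≤ _ := mul_le_mul_of_nonneg_right hr (mul_nonneg hP hQ)

/-- The limiting moment sequence. -/
noncomputable def mlMom (α : ℝ) (k : ℕ) : ℝ := (k.factorial : ℝ) / Real.Gamma ((k : ℝ) * α + 1)

lemma apx_tendsto {α : ℝ} (h0 : 0 < α) (k : ℕ) :
    Tendsto (fun n => apx α n k) atTop (𝓝 (mlMom α k)) := by
  have hka : 0 < (k : ℝ) * α + 1 := by positivity
  have t1 := (Real.GammaSeq_tendsto_Gamma ((k : ℝ) + 1)).div
    (Real.GammaSeq_tendsto_Gamma ((k : ℝ) * α + 1)) (Real.Gamma_pos_of_pos hka).ne'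
  rw [Real.Gamma_nat_eq_factorial] at t1
  have t2 := (tendsto_add_atTop_iff_nat 1).2 t1
  refine t2.congr (fun n => ?_)
  simp only [Pi.div_apply, Real.GammaSeq, apx]
  have hn : (0 : ℝ) < (n : ℝ) + 1 := by positivity
  rw [Finset.prod_div_distrib]
  have p1 : ∏ j ∈ Finset.range (n + 2), (1 + (k : ℝ) * α + j)
      = ∏ j ∈ Finset.range (n + 1 + 1), ((k : ℝ) * α + 1 + j) :=
    Finset.prod_congr rfl (fun j _ => by ring)
  have p2 : ∏ j ∈ Finset.range (n + 2), (1 + (k : ℝ) + j)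
      = ∏ j ∈ Finset.range (n + 1 + 1), ((k : ℝ) + 1 + j) :=
    Finset.prod_congr rfl (fun j _ => by ring)
  rw [p1, p2]
  have q1 : ∏ j ∈ Finset.range (n + 1 + 1), ((k : ℝ) * α + 1 + j) ≠ 0 :=
    Finset.prod_ne_zero_iff.2 (fun j _ => by positivity)
  have q2 : ∏ j ∈ Finset.range (n + 1 + 1), ((k : ℝ) + 1 + j) ≠ 0 :=
    Finset.prod_ne_zero_iff.2 (fun j _ => by positivity)
  have er : (((n : ℝ) + 1) ^ (1 - α)) ^ k * ((n : ℝ) + 1) ^ ((k : ℝ) * α + 1)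
      = ((n : ℝ) + 1) ^ ((k : ℝ) + 1) := by
    rw [← Real.rpow_natCast, ← Real.rpow_mul hn.le, ← Real.rpow_add hn]
    congr 1; ring
  push_cast
  rw [← er]
  have hne : ((n : ℝ) + 1) ^ ((k : ℝ) * α + 1) ≠ 0 := by positivity
  have hfa : ((n + 1).factorial : ℝ) ≠ 0 := by positivity
  field_simp

lemma gamma_lower {M y : ℝ} (hM : 0 < M) (hy : 0 ≤ y) :
    M ^ y * Real.exp (-M) ≤ Real.Gamma (y + 1) := by
  rw [Real.Gamma_eq_integral (by linarith), ← integral_exp_neg_Ioi M, ← integral_const_mul]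
  have hi := Real.GammaIntegral_convergent (s := y + 1) (by linarith)
  have hsub : Set.Ioi M ⊆ Set.Ioi (0 : ℝ) := Set.Ioi_subset_Ioi hM.le
  refine (setIntegral_mono_on ((integrableOn_exp_neg_Ioi M).const_mul _) (hi.mono_set hsub)
    measurableSet_Ioi (fun t ht => ?_)).trans
    (setIntegral_mono_set hi ?_ hsub.eventuallyLE)
  · rw [mul_comm, add_sub_cancel_right]
    have : M < t := ht
    gcongr
  · filter_upwards [ae_restrict_mem measurableSet_Ioi] with t ht
    have : 0 < t := ht
    simp only [Pi.zero_apply]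
    positivity

lemma mlMom_nonneg {α : ℝ} (h0 : 0 < α) (k : ℕ) : 0 ≤ mlMom α k := by
  unfold mlMom
  have := Real.Gamma_pos_of_pos (s := (k : ℝ) * α + 1) (by positivity)
  positivity

lemma mlMom_summable {α : ℝ} (h0 : 0 < α) : EgfSummable (mlMom α) := by
  intro r hr
  set M : ℝ := (2 * r + 1) ^ (α⁻¹) with hM
  have hM0 : 0 < M := by positivity
  have hMa : M ^ α = 2 * r + 1 := by
    rw [hM, ← Real.rpow_mul (by positivity), inv_mul_cancel₀ h0.ne', Real.rpow_one]
  have hg : Summable (fun k : ℕ => (r / (2 * r + 1)) ^ k * Real.exp M) := by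
    refine (summable_geometric_of_lt_one (by positivity) ?_).mul_right _
    rw [div_lt_one (by positivity)]; linarith
  refine Summable.of_nonneg_of_le (fun k => by positivity) (fun k => ?_) hg
  rw [abs_of_nonneg (mlMom_nonneg h0 k)]
  have hG := gamma_lower (y := (k : ℝ) * α) hM0 (by positivity)
  have e1 : M ^ ((k : ℝ) * α) = (2 * r + 1) ^ k := by
    rw [mul_comm, Real.rpow_mul hM0.le, hMa, Real.rpow_natCast]
  rw [e1] at hG
  have hf : (k.factorial : ℝ) ≠ 0 := by positivity
  have e2 : r ^ k / (k.factorial : ℝ) * mlMom α k = r ^ k / Real.Gamma ((k : ℝ) * α + 1) := by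
    unfold mlMom; field_simp
  rw [e2]
  calc r ^ k / Real.Gamma ((k : ℝ) * α + 1) ≤ r ^ k / ((2 * r + 1) ^ k * Real.exp (-M)) := by
        gcongr
    _ = _ := by rw [Real.exp_neg, div_pow]; field_simp

lemma mlMom_egf_nonneg {α : ℝ} (h0 : 0 < α) (h1 : α ≤ 1) (p : ℕ) (x : ℝ) :
    0 ≤ egfNeg (fun k => mlMom α (k + p)) x := by
  have ht : Tendsto (fun n => egfNeg (fun k => apx α n (k + p)) x) atTop
      (𝓝 (egfNeg (fun k => mlMom α (k + p)) x)) := by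
    unfold egfNeg
    refine tendsto_tsum_of_dominated_convergence
      (((mlMom_summable h0).shift_n p) |x| (abs_nonneg x))
      (fun k => (apx_tendsto h0 (k + p)).const_mul _) (Eventually.of_forall (fun n k => ?_))
    have hle := (apx_mono h0 h1 (k + p)).ge_of_tendsto (apx_tendsto h0 (k + p)) n
    simp only [norm_mul, norm_div, norm_pow, Real.norm_eq_abs, Nat.abs_cast, abs_neg,
      abs_of_nonneg (apx_nonneg h0 n (k + p)), abs_of_nonneg (mlMom_nonneg h0 (k + p))]
    exact mul_le_mul_of_nonneg_left hle (by positivity)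
  refine ge_of_tendsto' ht (fun n => ?_)
  exact (isMom_prod h0 h1 (n + 2)).egf_nonneg (c := ((n : ℝ) + 1) ^ (1 - α)) (by positivity) p x

lemma mittagLeffler_eq_egf (α : ℝ) :
    (fun y : ℝ => mittagLeffler α 1 (-y)) = egfNeg (mlMom α) := by
  funext y
  unfold mittagLeffler egfNeg mlMom
  refine tsum_congr (fun k => ?_)
  have hf : (k.factorial : ℝ) ≠ 0 := by positivity
  field_simp

theorem mittagLeffler_completelyMonotone (α : ℝ) (hα0 : 0 < α) (hα1 : α ≤ 1) :
    (∀ n : ℕ, ∀ x : ℝ, 0 < x →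
      0 ≤ (-1 : ℝ) ^ n * iteratedDeriv n (fun y : ℝ => mittagLeffler α 1 (-y)) x) ∧
    (∀ x : ℝ, 0 ≤ x → 0 ≤ mittagLeffler α 1 (-x)) := by
  constructor
  · intro n x _
    rw [mittagLeffler_eq_egf, (mlMom_summable hα0).iteratedDeriv n]
    rw [← mul_assoc, ← mul_pow]
    simpa using mlMom_egf_nonneg hα0 hα1 n x
  · intro x _
    have h := congrFun (mittagLeffler_eq_egf α) x
    rw [h]
    simpa using mlMom_egf_nonneg hα0 hα1 0 x
end

section
/- Let 0 < H < 1/2 and 1/2 < α < 1. There exists a constant C > 0 (depending only on α and H) such that for every λ > 0 and every t > 0, ∫_0^t τ^{1-2H} (∫_τ^t u^{H-3/2} (u-τ)^{H-1/2} du)² (t-τ)^{2α-2} E_{α,α}(-λ (t-τ)^α)² dτ ≤ C t^{2H+2α-2}. -/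
open Real intervalIntegral

lemma real_beta (p q a : ℝ) (hp : 0 < p) (hq : 0 < q) (ha : 0 < a) :
    ∫ x in (0:ℝ)..a, x ^ (p - 1) * (a - x) ^ (q - 1) =
      a ^ (p + q - 1) * (Gamma p * Gamma q / Gamma (p + q)) := by
  have h := Complex.betaIntegral_scaled (p : ℂ) (q : ℂ) ha
  rw [Complex.betaIntegral_eq_Gamma_mul_div _ _ (by simpa) (by simpa)] at h
  have h2 : ∫ x in (0:ℝ)..a, (x : ℂ) ^ ((p:ℂ) - 1) * ((a : ℂ) - x) ^ ((q:ℂ) - 1) =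
      ((∫ x in (0:ℝ)..a, x ^ (p - 1) * (a - x) ^ (q - 1) : ℝ) : ℂ) := by
    rw [← intervalIntegral.integral_ofReal]
    apply intervalIntegral.integral_congr
    intro x hx
    rw [Set.uIcc_of_le ha.le] at hx
    simp only
    rw [Complex.ofReal_mul, Complex.ofReal_cpow hx.1, Complex.ofReal_cpow (sub_nonneg.2 hx.2)]
    push_cast
    rfl
  rw [h2] at h
  apply Complex.ofReal_injective
  rw [h, ← Complex.ofReal_add, Complex.Gamma_ofReal, Complex.Gamma_ofReal, Complex.Gamma_ofReal]
  push_cast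
  rw [Complex.ofReal_cpow ha.le]
  push_cast
  rfl

lemma real_beta_integrable (p q a : ℝ) (hp : 0 < p) (hq : 0 < q) (ha : 0 < a) :
    IntervalIntegrable (fun x => x ^ (p - 1) * (a - x) ^ (q - 1)) MeasureTheory.volume 0 a := by
  apply intervalIntegral.intervalIntegrable_of_integral_ne_zero
  rw [real_beta p q a hp hq ha]
  have := Gamma_pos_of_pos hp
  have := Gamma_pos_of_pos hq
  have := Gamma_pos_of_pos (add_pos hp hq)
  positivity

lemma Gamma_ratio (α x : ℝ) (h0 : 0 < α) (h1 : α < 1) (hx : 0 < x) :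
    Gamma x * (x / (x + α) ^ (1 - α)) ≤ Gamma (x + α) := by
  have h := Real.Gamma_mul_add_mul_le_rpow_Gamma_mul_rpow_Gamma (s := x + α) (t := x + α + 1)
    (a := α) (b := 1 - α) (by positivity) (by positivity) h0 (by linarith) (by ring)
  have e : α * (x + α) + (1 - α) * (x + α + 1) = x + 1 := by ring
  have hxa : 0 < x + α := by positivity
  have hG := Gamma_pos_of_pos hxa
  rw [e, Gamma_add_one hx.ne', Gamma_add_one hxa.ne', mul_rpow hxa.le hG.le] at h
  have e2 : Gamma (x + α) ^ α * ((x + α) ^ (1 - α) * Gamma (x + α) ^ (1 - α))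
      = Gamma (x + α) * (x + α) ^ (1 - α) := by
    have : Gamma (x + α) ^ α * Gamma (x + α) ^ (1 - α) = Gamma (x + α) := by
      rw [← rpow_add hG]; simp
    linear_combination (x + α) ^ (1 - α) * this
  rw [e2] at h
  have : 0 < (x + α) ^ (1 - α) := by positivity
  rw [← mul_div_assoc, div_le_iff₀ this]
  linarith

lemma ml_summable_s12 (α x : ℝ) (h0 : 0 < α) (h1 : α < 1) :
    Summable fun k : ℕ => x ^ k / Gamma ((k : ℝ) * α + α) := by
  have hG : ∀ k : ℕ, 0 < Gamma ((k : ℝ) * α + α) := fun k => Gamma_pos_of_pos (by positivity)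
  -- growth of the ratio
  have hT : Filter.Tendsto (fun k : ℕ => (((k:ℝ) * α + α)) ^ α / 2) Filter.atTop Filter.atTop := by
    apply Filter.Tendsto.atTop_div_const (by norm_num)
    apply (tendsto_rpow_atTop h0).comp
    apply Filter.tendsto_atTop_add_const_right
    exact tendsto_natCast_atTop_atTop.atTop_mul_const h0
  apply summable_of_ratio_norm_eventually_le (r := 1/2) (by norm_num)
  filter_upwards [hT.eventually_ge_atTop (2 * |x|)] with k hk
  have hy : 0 < (k:ℝ) * α + α := by positivity
  set y := (k:ℝ) * α + α with hydef
  have hr := Gamma_ratio α y h0 h1 hy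
  have e : ((k + 1 : ℕ) : ℝ) * α + α = y + α := by rw [hydef]; push_cast; ring
  rw [e]
  have hGy := Gamma_pos_of_pos hy
  have hGya := Gamma_pos_of_pos (add_pos hy h0)
  have hlow : y ^ α / 2 ≤ y / (y + α) ^ (1 - α) := by
    have hle : (y + α) ^ (1 - α) ≤ 2 * y ^ (1 - α) := by
      calc (y + α) ^ (1 - α) ≤ (2 * y) ^ (1 - α) := by
            apply rpow_le_rpow (by positivity) _ (by linarith)
            have : 0 ≤ (k:ℝ) * α := by positivity
            linarith
        _ = 2 ^ (1 - α) * y ^ (1 - α) := mul_rpow (by norm_num) hy.le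
        _ ≤ 2 * y ^ (1 - α) := by
            gcongr
            calc (2:ℝ) ^ (1 - α) ≤ 2 ^ (1:ℝ) := rpow_le_rpow_of_exponent_le (by norm_num) (by linarith)
              _ = 2 := by simp
    have hp : 0 < (y + α) ^ (1 - α) := by positivity
    rw [le_div_iff₀ hp]
    calc y ^ α / 2 * (y + α) ^ (1 - α) ≤ y ^ α / 2 * (2 * y ^ (1 - α)) := by gcongr
      _ = y ^ α * y ^ (1 - α) := by ring
      _ = y := by rw [← rpow_add hy]; simp
  have h3 : Gamma y * (2 * |x|) ≤ Gamma (y + α) :=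
    le_trans (mul_le_mul_of_nonneg_left (hk.trans hlow) hGy.le) hr
  rw [norm_div, norm_div, norm_of_nonneg hGy.le, norm_of_nonneg hGya.le, norm_pow, norm_pow,
    pow_succ, Real.norm_eq_abs]
  rw [div_le_iff₀ hGya]
  have : |x| ^ k * |x| = 1/2 * (|x| ^ k / Gamma y) * (Gamma y * (2 * |x|)) := by
    field_simp
  rw [this]
  gcongr

lemma ml_continuous (α : ℝ) (h0 : 0 < α) (h1 : α < 1) :
    Continuous (fun x => mittagLeffler α α x) := by
  rw [continuous_iff_continuousAt]
  intro x
  have : ContinuousOn (fun x => mittagLeffler α α x) (Metric.ball 0 (|x| + 1)) := by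
    unfold mittagLeffler
    apply continuousOn_tsum (u := fun k : ℕ => (|x| + 1) ^ k / Gamma ((k : ℝ) * α + α))
    · intro i; fun_prop
    · exact ml_summable_s12 α _ h0 h1
    · intro n z hz
      have hG : 0 < Gamma ((n : ℝ) * α + α) := Gamma_pos_of_pos (by positivity)
      rw [norm_div, norm_of_nonneg hG.le, norm_pow]
      gcongr
      simpa using (mem_ball_zero_iff.1 hz).le
  apply this.continuousAt
  apply Metric.isOpen_ball.mem_nhds
  simp

lemma ml_conv (α s : ℝ) (h0 : 0 < α) (h1 : α < 1) (hs : 0 < s) :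
    ∫ r in (0:ℝ)..s, r ^ (α - 1) * (s - r) ^ (α - 1) * mittagLeffler α α (-(r ^ α)) =
      s ^ (α - 1) * (1 - Gamma α * mittagLeffler α α (-(s ^ α))) := by
  have hG : ∀ k : ℕ, 0 < Gamma ((k : ℝ) * α + α) := fun k => Gamma_pos_of_pos (by positivity)
  have hGa := Gamma_pos_of_pos h0
  set a : ℕ → ℝ := fun k => (-(s ^ α)) ^ k / Gamma ((k : ℝ) * α + α) with ha
  have hsum : Summable a := ml_summable_s12 α _ h0 h1
  set F : ℕ → ℝ → ℝ := fun k r =>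
    r ^ (α - 1) * (s - r) ^ (α - 1) * ((-(r ^ α)) ^ k / Gamma ((k : ℝ) * α + α)) with hF
  have hFe : ∀ k : ℕ, ∀ r ∈ Set.Ioc 0 s, F k r =
      ((-1) ^ k / Gamma ((k : ℝ) * α + α)) * (r ^ (k * α + α - 1) * (s - r) ^ (α - 1)) := by
    intro k r hr
    have : r ^ (k * α + α - 1) = r ^ (α - 1) * (r ^ α) ^ k := by
      rw [← rpow_natCast, ← rpow_mul hr.1.le, ← rpow_add hr.1]; congr 1; ring
    simp only [hF]
    rw [this, neg_pow]; ring
  have hval : ∀ k : ℕ, s ^ (k * α + α + α - 1) *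
        (Gamma (k * α + α) * Gamma α / Gamma (k * α + α + α)) / Gamma (k * α + α)
        = Gamma α * s ^ (α - 1) * ((s ^ α) ^ (k + 1) / Gamma (((k + 1 : ℕ) : ℝ) * α + α)) := by
    intro k
    have e1 : s ^ (k * α + α + α - 1) = s ^ (α - 1) * (s ^ α) ^ (k + 1) := by
      rw [← rpow_natCast, ← rpow_mul hs.le, ← rpow_add hs]; congr 1; push_cast; ring
    have e2 : (((k + 1 : ℕ) : ℝ) * α + α) = k * α + α + α := by push_cast; ring
    rw [e1, e2]
    have := hG k
    field_simp
  have hbi := fun k : ℕ => real_beta (k * α + α) α s (by positivity) h0 hs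
  have hint : ∀ k : ℕ, ∫ r in Set.Ioc 0 s, F k r = - (Gamma α * s ^ (α - 1)) * a (k + 1) := by
    intro k
    rw [MeasureTheory.setIntegral_congr_fun measurableSet_Ioc (hFe k),
      MeasureTheory.integral_const_mul, ← intervalIntegral.integral_of_le hs.le, hbi]
    have := hval k
    simp only [ha]
    rw [neg_pow (s ^ α), pow_succ (-1 : ℝ)]
    linear_combination (-1) ^ k * this
  have hintn : ∀ k : ℕ, ∫ r in Set.Ioc 0 s, ‖F k r‖ = (Gamma α * s ^ (α - 1)) * ‖a (k + 1)‖ := by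
    intro k
    have hn : ∀ r ∈ Set.Ioc 0 s, ‖F k r‖ =
      (1 / Gamma ((k : ℝ) * α + α)) * (r ^ (k * α + α - 1) * (s - r) ^ (α - 1)) := by
      intro r hr
      have h1 : 0 ≤ r ^ (k * α + α - 1) := rpow_nonneg hr.1.le _
      have h2 : 0 ≤ (s - r) ^ (α - 1) := rpow_nonneg (sub_nonneg.2 hr.2) _
      rw [hFe k r hr, norm_mul, norm_div, norm_pow, norm_neg, norm_one, one_pow,
        norm_of_nonneg (hG k).le, norm_of_nonneg (mul_nonneg h1 h2)]
    rw [MeasureTheory.setIntegral_congr_fun measurableSet_Ioc hn,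
      MeasureTheory.integral_const_mul, ← intervalIntegral.integral_of_le hs.le, hbi]
    have := hval k
    have hsa : 0 ≤ s ^ α := by positivity
    simp only [ha]
    rw [norm_div, norm_of_nonneg (hG (k+1)).le, norm_pow, norm_neg, norm_of_nonneg hsa]
    linear_combination this
  have hFi : ∀ k : ℕ, MeasureTheory.Integrable (F k) (MeasureTheory.volume.restrict (Set.Ioc 0 s)) := by
    intro k
    have h := (real_beta_integrable (k * α + α) α s (by positivity) h0 hs).const_mul
      ((-1) ^ k / Gamma ((k : ℝ) * α + α))
    rw [intervalIntegrable_iff_integrableOn_Ioc_of_le hs.le] at h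
    exact h.congr_fun (fun r hr => (hFe k r hr).symm) measurableSet_Ioc
  have hs1 : Summable fun k => a (k + 1) := (summable_nat_add_iff 1).2 hsum
  have key := MeasureTheory.hasSum_integral_of_summable_integral_norm hFi (by
    simp_rw [hintn]
    exact hs1.norm.mul_left _)
  have h3 := key.tsum_eq
  simp_rw [hint] at h3
  rw [tsum_mul_left] at h3
  have h4 := hsum.tsum_eq_zero_add
  have h5 : mittagLeffler α α (-(s ^ α)) = ∑' k, a k := rfl
  have h6 : a 0 = 1 / Gamma α := by simp [ha]
  rw [intervalIntegral.integral_of_le hs.le]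
  have h7 : ∀ r, ∑' k, F k r = r ^ (α - 1) * (s - r) ^ (α - 1) * mittagLeffler α α (-(r ^ α)) := by
    intro r
    simp only [hF]
    rw [tsum_mul_left]; rfl
  simp_rw [h7] at h3
  rw [← h3, h5, h4, h6]
  field_simp
  ring

lemma ml_cont_g (α : ℝ) (h0 : 0 < α) (h1 : α < 1) :
    Continuous (fun r : ℝ => mittagLeffler α α (-(r ^ α))) :=
  (ml_continuous α h0 h1).comp (Real.continuous_rpow_const h0.le).neg

lemma ml_conv_int (α s : ℝ) (h0 : 0 < α) (h1 : α < 1) (hs : 0 < s) :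
    IntervalIntegrable
      (fun r : ℝ => r ^ (α - 1) * (s - r) ^ (α - 1) * mittagLeffler α α (-(r ^ α)))
      MeasureTheory.volume 0 s :=
  (real_beta_integrable α α s h0 h0 hs).mul_continuousOn (ml_cont_g α h0 h1).continuousOn

lemma ml_zero (α : ℝ) (h0 : 0 < α) : mittagLeffler α α (-((0:ℝ) ^ α)) = 1 / Gamma α := by
  rw [zero_rpow h0.ne', neg_zero]
  unfold mittagLeffler
  rw [tsum_eq_single 0]
  · simp
  · intro k hk; simp [hk]

lemma ml_pos (α : ℝ) (h0 : 0 < α) (h1 : α < 1) (s : ℝ) (hs : 0 ≤ s) :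
    0 < mittagLeffler α α (-(s ^ α)) := by
  set g : ℝ → ℝ := fun r => mittagLeffler α α (-(r ^ α)) with hg
  have hgc : Continuous g := ml_cont_g α h0 h1
  have hGa := Gamma_pos_of_pos h0
  by_contra! hneg
  -- first zero
  set Z : Set ℝ := Set.Ici 0 ∩ g ⁻¹' (Set.Iic 0) with hZ
  have hZc : IsClosed Z := isClosed_Ici.inter (isClosed_Iic.preimage hgc)
  have hZn : Z.Nonempty := ⟨s, hs, hneg⟩
  have hZb : BddBelow Z := ⟨0, fun x hx => hx.1⟩
  set b := sInf Z with hb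
  have hbZ : b ∈ Z := hZc.csInf_mem hZn hZb
  have hlt : ∀ r, 0 ≤ r → r < b → 0 < g r := by
    intro r hr hrb
    by_contra! h
    exact absurd (csInf_le hZb (show r ∈ Z from ⟨hr, h⟩)) (not_le.2 hrb)
  have hgb : g b ≤ 0 := hbZ.2
  have hb0 : 0 < b := by
    rcases (show (0:ℝ) ≤ b from hbZ.1).lt_or_eq with h | h
    · exact h
    · exfalso
      rw [← h] at hgb
      have : g 0 = 1 / Gamma α := ml_zero α h0
      rw [this] at hgb
      have : 0 < 1 / Gamma α := by positivity
      linarith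
  -- choose the left endpoint
  have hcont : Filter.Tendsto (fun x : ℝ => (b - x) ^ α / α) (nhdsWithin b (Set.Iio b)) (nhds 0) := by
    have : ContinuousAt (fun x : ℝ => (b - x) ^ α / α) b := by
      have : Continuous (fun x : ℝ => (b - x) ^ α / α) :=
        ((Real.continuous_rpow_const h0.le).comp (continuous_const.sub continuous_id)).div_const _
      exact this.continuousAt
    have h := this.tendsto
    simp only [sub_self, zero_rpow h0.ne', zero_div] at h
    exact h.mono_left nhdsWithin_le_nhds
  obtain ⟨t₁, ⟨ht1s, ht1h⟩, ht1b⟩ := ((hcont.eventually (gt_mem_nhds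
      (show (0:ℝ) < Gamma α / 2 by positivity))).and
    (Filter.Eventually.filter_mono nhdsWithin_le_nhds
      (lt_mem_nhds (show b / 2 < b by linarith)))).and self_mem_nhdsWithin |>.exists
  replace ht1b : t₁ < b := ht1b
  have ht10 : 0 < t₁ := by linarith
  -- maximum of y on the interval
  set y : ℝ → ℝ := fun r => r ^ (α - 1) * g r with hy
  have hyc : ContinuousOn y (Set.Icc t₁ b) := by
    apply ContinuousOn.mul _ hgc.continuousOn
    intro r hr
    exact (Real.continuousAt_rpow_const r _ (Or.inl (by linarith [hr.1]))).continuousWithinAt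
  obtain ⟨t, ht, hmax⟩ := isCompact_Icc.exists_isMaxOn (Set.nonempty_Icc.2 ht1b.le) hyc
  have hyt1 : 0 < y t₁ := mul_pos (rpow_pos_of_pos ht10 _) (hlt _ ht10.le ht1b)
  have hyt : 0 < y t := hyt1.trans_le (hmax (Set.left_mem_Icc.2 ht1b.le))
  have ht0 : 0 < t := ht10.trans_le ht.1
  have htb : t < b := by
    rcases ht.2.lt_or_eq with h | h
    · exact h
    · exfalso
      rw [h] at hyt
      have : y b ≤ 0 := mul_nonpos_of_nonneg_of_nonpos (rpow_nonneg hb0.le _) hgb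
      linarith
  -- convolution identities
  have hcb := ml_conv α b h0 h1 hb0
  have hct := ml_conv α t h0 h1 ht0
  have hib := ml_conv_int α b h0 h1 hb0
  have hit := ml_conv_int α t h0 h1 ht0
  have hib1 : IntervalIntegrable
      (fun r : ℝ => r ^ (α - 1) * (b - r) ^ (α - 1) * mittagLeffler α α (-(r ^ α)))
      MeasureTheory.volume 0 t := by
    apply hib.mono_set
    rw [Set.uIcc_of_le ht0.le, Set.uIcc_of_le hb0.le]
    exact Set.Icc_subset_Icc_right htb.le
  have hib2 : IntervalIntegrable
      (fun r : ℝ => r ^ (α - 1) * (b - r) ^ (α - 1) * mittagLeffler α α (-(r ^ α)))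
      MeasureTheory.volume t b := by
    apply hib.mono_set
    rw [Set.uIcc_of_le htb.le, Set.uIcc_of_le hb0.le]
    exact Set.Icc_subset_Icc_left ht0.le
  have hsplit := intervalIntegral.integral_add_adjacent_intervals hib1 hib2
  -- first piece
  have hp1 : (∫ r in (0:ℝ)..t, r ^ (α - 1) * (b - r) ^ (α - 1) * mittagLeffler α α (-(r ^ α)))
      ≤ ∫ r in (0:ℝ)..t, (b ^ (α - 1) / t ^ (α - 1)) *
        (r ^ (α - 1) * (t - r) ^ (α - 1) * mittagLeffler α α (-(r ^ α))) := by
    apply intervalIntegral.integral_mono_on_of_le_Ioo ht0.le hib1 (hit.const_mul _)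
    intro r hr
    have hgr : 0 < mittagLeffler α α (-(r ^ α)) := hlt r hr.1.le (hr.2.trans htb)
    have hrp : 0 < r ^ (α - 1) := rpow_pos_of_pos hr.1 _
    have htr : 0 < t - r := sub_pos.2 hr.2
    have hbr : 0 < b - r := by linarith
    have hk : (b - r) ^ (α - 1) ≤ b ^ (α - 1) / t ^ (α - 1) * (t - r) ^ (α - 1) := by
      have htp : 0 < t ^ (α - 1) := rpow_pos_of_pos ht0 _
      rw [div_mul_eq_mul_div, le_div_iff₀ htp, ← mul_rpow hbr.le ht0.le, ← mul_rpow hb0.le htr.le]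
      apply rpow_le_rpow_of_nonpos (by positivity) _ (by linarith)
      nlinarith [hr.1]
    calc r ^ (α - 1) * (b - r) ^ (α - 1) * mittagLeffler α α (-(r ^ α))
        ≤ r ^ (α - 1) * (b ^ (α - 1) / t ^ (α - 1) * (t - r) ^ (α - 1)) *
            mittagLeffler α α (-(r ^ α)) := by gcongr
      _ = _ := by ring
  rw [intervalIntegral.integral_const_mul, hct] at hp1
  -- second piece
  have hi3 : IntervalIntegrable (fun r : ℝ => (b - r) ^ (α - 1)) MeasureTheory.volume t b := by
    have := (intervalIntegral.intervalIntegrable_rpow' (a := b - t) (b := 0)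
      (show -1 < α - 1 by linarith)).comp_sub_left b
    simpa using this
  have hp2 : (∫ r in t..b, r ^ (α - 1) * (b - r) ^ (α - 1) * mittagLeffler α α (-(r ^ α)))
      ≤ ∫ r in t..b, y t * (b - r) ^ (α - 1) := by
    apply intervalIntegral.integral_mono_on htb.le hib2 (hi3.const_mul _)
    intro r hr
    have h1 : y r ≤ y t := hmax ⟨ht.1.trans hr.1, hr.2⟩
    have h2 : 0 ≤ (b - r) ^ (α - 1) := rpow_nonneg (sub_nonneg.2 hr.2) _
    calc r ^ (α - 1) * (b - r) ^ (α - 1) * mittagLeffler α α (-(r ^ α))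
        = y r * (b - r) ^ (α - 1) := by simp only [hy, hg]; ring
      _ ≤ _ := by gcongr
  have hp3 : ∫ r in t..b, (b - r) ^ (α - 1) = (b - t) ^ α / α := by
    rw [intervalIntegral.integral_comp_sub_left (fun r => r ^ (α - 1)), sub_self,
      integral_rpow (Or.inl (by linarith))]
    simp [zero_rpow h0.ne']
  rw [intervalIntegral.integral_const_mul, hp3] at hp2
  have hsm : (b - t) ^ α / α < Gamma α / 2 := by
    refine lt_of_le_of_lt ?_ ht1s
    gcongr
    · exact ht.1
  -- combine
  have hgbm : mittagLeffler α α (-(b ^ α)) ≤ 0 := hgb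
  have hbp : 0 < b ^ (α - 1) := rpow_pos_of_pos hb0 _
  have htp : 0 < t ^ (α - 1) := rpow_pos_of_pos ht0 _
  have hlow : b ^ (α - 1) ≤ b ^ (α - 1) * (1 - Gamma α * mittagLeffler α α (-(b ^ α))) := by
    nlinarith [mul_nonneg (mul_nonneg hbp.le hGa.le) (neg_nonneg.2 hgbm)]
  have e1 : b ^ (α - 1) / t ^ (α - 1) *
      (t ^ (α - 1) * (1 - Gamma α * mittagLeffler α α (-(t ^ α))))
      = b ^ (α - 1) - b ^ (α - 1) / t ^ (α - 1) * Gamma α * y t := by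
    simp only [hy, hg]; field_simp
  rw [e1] at hp1
  have hratio : 1 / 2 ≤ b ^ (α - 1) / t ^ (α - 1) := by
    rw [le_div_iff₀ htp]
    have : t ^ (α - 1) ≤ (b / 2) ^ (α - 1) :=
      rpow_le_rpow_of_nonpos (by positivity) (by linarith [ht.1]) (by linarith)
    have h2 : (b / 2) ^ (α - 1) = b ^ (α - 1) * 2 ^ (1 - α) := by
      rw [div_rpow hb0.le (by norm_num), div_eq_mul_inv, ← rpow_neg (by norm_num)]
      congr 2; ring
    have h3 : (2:ℝ) ^ (1 - α) ≤ 2 ^ (1:ℝ) :=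
      rpow_le_rpow_of_exponent_le (by norm_num) (by linarith)
    rw [rpow_one] at h3
    nlinarith
  have f1 : b ^ (α - 1) / t ^ (α - 1) * Gamma α * y t ≤ y t * ((b - t) ^ α / α) := by
    linarith
  have f2 : y t * ((b - t) ^ α / α) < y t * (Gamma α / 2) := by gcongr
  have f3 : 1 / 2 * (Gamma α * y t) ≤ b ^ (α - 1) / t ^ (α - 1) * (Gamma α * y t) := by
    gcongr
  linarith

lemma ml_le (α : ℝ) (h0 : 0 < α) (h1 : α < 1) (s : ℝ) (hs : 0 ≤ s) :
    mittagLeffler α α (-(s ^ α)) ≤ 1 / Gamma α := by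
  rcases hs.lt_or_eq with hs | hs
  · have h := ml_conv α s h0 h1 hs
    have hnn : 0 ≤ ∫ r in (0:ℝ)..s,
        r ^ (α - 1) * (s - r) ^ (α - 1) * mittagLeffler α α (-(r ^ α)) := by
      apply intervalIntegral.integral_nonneg hs.le
      intro r hr
      exact mul_nonneg (mul_nonneg (rpow_nonneg hr.1 _) (rpow_nonneg (sub_nonneg.2 hr.2) _))
        (ml_pos α h0 h1 r hr.1).le
    rw [h] at hnn
    have := nonneg_of_mul_nonneg_right hnn (rpow_pos_of_pos hs _)
    rw [le_div_iff₀ (Gamma_pos_of_pos h0)]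
    linarith
  · rw [← hs, ml_zero α h0]

lemma ml_sq_le (α : ℝ) (h0 : 0 < α) (h1 : α < 1) (x : ℝ) (hx : 0 ≤ x) :
    (mittagLeffler α α (-x)) ^ 2 ≤ (1 / Gamma α) ^ 2 := by
  have e : x = (x ^ (1 / α)) ^ α := by
    rw [← rpow_mul hx]; field_simp; simp
  rw [e]
  have hn : 0 ≤ x ^ (1 / α) := rpow_nonneg hx _
  exact pow_le_pow_left₀ (ml_pos α h0 h1 _ hn).le (ml_le α h0 h1 _ hn) 2

lemma inner_bound (H τ t : ℝ) (hH0 : 0 < H) (hH1 : H < 1/2) (hτ : 0 < τ) (hτt : τ ≤ t) :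
    0 ≤ (∫ u in τ..t, u ^ (H - 3/2) * (u - τ) ^ (H - 1/2)) ∧
    (∫ u in τ..t, u ^ (H - 3/2) * (u - τ) ^ (H - 1/2)) ≤
      (1 / (H + 1/2) + 1 / (1 - 2*H)) * τ ^ (2*H - 1) := by
  set f : ℝ → ℝ := fun u => u ^ (H - 3/2) * (u - τ) ^ (H - 1/2) with hf
  have hfn : ∀ u, τ ≤ u → 0 ≤ f u := fun u hu =>
    mul_nonneg (rpow_nonneg (hτ.le.trans hu) _) (rpow_nonneg (sub_nonneg.2 hu) _)
  have hI0 : ∀ c d : ℝ, IntervalIntegrable (fun u : ℝ => (u - τ) ^ (H - 1/2))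
      MeasureTheory.volume c d := by
    intro c d
    have := (intervalIntegral.intervalIntegrable_rpow' (a := c - τ) (b := d - τ)
      (show -1 < H - 1/2 by linarith)).comp_sub_right τ
    simpa using this
  have hI : ∀ c d : ℝ, τ ≤ c → τ ≤ d → IntervalIntegrable f MeasureTheory.volume c d := by
    intro c d hc hd
    apply (hI0 c d).continuousOn_mul
    intro u hu
    have : τ ≤ u := (le_min hc hd).trans hu.1
    exact (Real.continuousAt_rpow_const u _ (Or.inl (by linarith))).continuousWithinAt
  refine ⟨intervalIntegral.integral_nonneg hτt fun u hu => hfn u hu.1, ?_⟩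
  set T := max t (2 * τ) with hT
  have hT1 : t ≤ T := le_max_left _ _
  have hT2 : 2 * τ ≤ T := le_max_right _ _
  have s1 : (∫ u in τ..t, f u) ≤ ∫ u in τ..T, f u := by
    have := intervalIntegral.integral_add_adjacent_intervals (hI τ t le_rfl hτt)
      (hI t T hτt (by linarith))
    have h2 : 0 ≤ ∫ u in t..T, f u :=
      intervalIntegral.integral_nonneg hT1 fun u hu => hfn u (hτt.trans hu.1)
    linarith
  have s2 := intervalIntegral.integral_add_adjacent_intervals (hI τ (2*τ) le_rfl (by linarith))
      (hI (2*τ) T (by linarith) (by linarith))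
  have s3 : (∫ u in τ..(2*τ), f u) ≤ 1 / (H + 1/2) * τ ^ (2*H - 1) := by
    have h1 : (∫ u in τ..(2*τ), f u) ≤ ∫ u in τ..(2*τ), τ ^ (H - 3/2) * (u - τ) ^ (H - 1/2) := by
      apply intervalIntegral.integral_mono_on (by linarith) (hI τ (2*τ) le_rfl (by linarith))
        ((hI0 _ _).const_mul _)
      intro u hu
      have : 0 ≤ (u - τ) ^ (H - 1/2) := rpow_nonneg (sub_nonneg.2 hu.1) _
      have h2 : u ^ (H - 3/2) ≤ τ ^ (H - 3/2) := rpow_le_rpow_of_nonpos hτ hu.1 (by linarith)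
      exact mul_le_mul_of_nonneg_right h2 this
    refine h1.trans (le_of_eq ?_)
    rw [intervalIntegral.integral_const_mul,
      intervalIntegral.integral_comp_sub_right (fun u => u ^ (H - 1/2)), sub_self,
      integral_rpow (Or.inl (by linarith)), zero_rpow (by linarith)]
    have e : 2 * τ - τ = τ := by ring
    have e2 : τ ^ (2*H - 1) = τ ^ (H - 3/2) * τ ^ (H - 1/2 + 1) := by
      rw [← rpow_add hτ]; congr 1; ring
    rw [e, e2, show H - 1/2 + 1 = H + 1/2 by ring]
    ring
  have s4 : (∫ u in (2*τ)..T, f u) ≤ 1 / (1 - 2*H) * τ ^ (2*H - 1) := by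
    have h1 : (∫ u in (2*τ)..T, f u) ≤ ∫ u in (2*τ)..T, (u - τ) ^ (2*H - 2) := by
      apply intervalIntegral.integral_mono_on hT2 (hI _ T (by linarith) (by linarith))
      · apply ContinuousOn.intervalIntegrable
        intro u hu
        rw [Set.uIcc_of_le hT2] at hu
        apply ContinuousAt.continuousWithinAt
        exact (continuousAt_id.sub continuousAt_const).rpow_const (Or.inl (by
          exact (show (0:ℝ) < u - τ by linarith [hu.1]).ne'))
      · intro u hu
        have hu0 : 0 < u - τ := by linarith [hu.1]
        have h2 : u ^ (H - 3/2) ≤ (u - τ) ^ (H - 3/2) :=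
          rpow_le_rpow_of_nonpos hu0 (by linarith) (by linarith)
        calc f u ≤ (u - τ) ^ (H - 3/2) * (u - τ) ^ (H - 1/2) :=
              mul_le_mul_of_nonneg_right h2 (rpow_nonneg hu0.le _)
          _ = (u - τ) ^ (2*H - 2) := by rw [← rpow_add hu0]; congr 1; ring
    refine h1.trans ?_
    have e : 2 * τ - τ = τ := by ring
    rw [intervalIntegral.integral_comp_sub_right (fun u => u ^ (2*H - 2)), e,
      integral_rpow (Or.inr ⟨by linarith, by
        rw [Set.uIcc_of_le (by linarith)]; intro h; linarith [h.1]⟩)]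
    rw [show 2*H - 2 + 1 = -(1 - 2*H) by ring, div_neg, ← neg_div, one_div_mul_eq_div]
    have hp : 0 ≤ (T - τ) ^ (-(1 - 2*H)) := rpow_nonneg (by linarith) _
    rw [show 2*H - 1 = -(1 - 2*H) by ring]
    have : 0 < 1 - 2*H := by linarith
    gcongr
    linarith
  calc _ ≤ _ := s1
    _ ≤ _ := by rw [← s2, add_mul]; exact add_le_add s3 s4

theorem I2_bound (α H : ℝ) (hH0 : 0 < H) (hH1 : H < 1/2)
    (hα0 : 1/2 < α) (hα1 : α < 1) :
    ∃ C : ℝ, 0 < C ∧ ∀ lam t : ℝ, 0 < lam → 0 < t →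
      (∫ τ in (0:ℝ)..t, τ ^ (1 - 2*H)
          * (∫ u in τ..t, u ^ (H - 3/2) * (u - τ) ^ (H - 1/2)) ^ 2
          * (t - τ) ^ (2*α - 2) * (mittagLeffler α α (-lam * (t - τ) ^ α)) ^ 2)
        ≤ C * t ^ (2*H + 2*α - 2) := by
  have h0 : 0 < α := by linarith
  set K := (1 / (H + 1/2) + 1 / (1 - 2*H)) with hK
  have hKp : 0 < K := by
    have : 0 < 1 - 2*H := by linarith
    positivity
  have hGa := Gamma_pos_of_pos h0
  set B := Gamma (2*H) * Gamma (2*α - 1) / Gamma (2*H + (2*α - 1)) with hB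
  have hBp : 0 < B := by
    have h1 := Gamma_pos_of_pos (show 0 < 2*H by linarith)
    have h2 := Gamma_pos_of_pos (show 0 < 2*α - 1 by linarith)
    have h3 := Gamma_pos_of_pos (show 0 < 2*H + (2*α - 1) by linarith)
    positivity
  refine ⟨K ^ 2 * (1 / Gamma α) ^ 2 * B, by positivity, ?_⟩
  intro lam t hlam ht
  have hint := (real_beta_integrable (2*H) (2*α - 1) t (by linarith) (by linarith) ht).const_mul
    (K ^ 2 * (1 / Gamma α) ^ 2)
  have hval := real_beta (2*H) (2*α - 1) t (by linarith) (by linarith) ht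
  have e2 : 2*α - 1 - 1 = 2*α - 2 := by ring
  have e3 : 2*H + (2*α - 1) - 1 = 2*H + 2*α - 2 := by ring
  rw [e2] at hint hval
  rw [e3] at hval
  have hfin : K ^ 2 * (1 / Gamma α) ^ 2 * B * t ^ (2*H + 2*α - 2) =
      ∫ x in (0:ℝ)..t, K ^ 2 * (1 / Gamma α) ^ 2 * (x ^ (2*H - 1) * (t - x) ^ (2*α - 2)) := by
    rw [intervalIntegral.integral_const_mul, hval]; ring
  rw [hfin, intervalIntegral.integral_of_le ht.le, intervalIntegral.integral_of_le ht.le]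
  rw [intervalIntegrable_iff_integrableOn_Ioc_of_le ht.le] at hint
  apply MeasureTheory.integral_mono_of_nonneg _ hint
  · filter_upwards [MeasureTheory.ae_restrict_mem measurableSet_Ioc] with τ hτ
    obtain ⟨hi0, hi1⟩ := inner_bound H τ t hH0 hH1 hτ.1 hτ.2
    have hm := ml_sq_le α h0 hα1 (lam * (t - τ) ^ α)
      (mul_nonneg hlam.le (rpow_nonneg (sub_nonneg.2 hτ.2) _))
    rw [← neg_mul] at hm
    have hsq := pow_le_pow_left₀ hi0 hi1 2
    have ha : 0 ≤ τ ^ (1 - 2*H) := rpow_nonneg hτ.1.le _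
    have hb : 0 ≤ (t - τ) ^ (2*α - 2) := rpow_nonneg (sub_nonneg.2 hτ.2) _
    have e : τ ^ (1 - 2*H) * (τ ^ (2*H - 1)) ^ 2 = τ ^ (2*H - 1) := by
      rw [← rpow_natCast, ← rpow_mul hτ.1.le, ← rpow_add hτ.1]; congr 1; push_cast; ring
    calc _ ≤ τ ^ (1 - 2*H) * (K * τ ^ (2*H - 1)) ^ 2 * (t - τ) ^ (2*α - 2) * (1 / Gamma α) ^ 2 := by
          gcongr
      _ = _ := by
          linear_combination K ^ 2 * (1 / Gamma α) ^ 2 * (t - τ) ^ (2*α - 2) * e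
  · filter_upwards [MeasureTheory.ae_restrict_mem measurableSet_Ioc] with τ hτ
    have ha : 0 ≤ τ ^ (1 - 2*H) := rpow_nonneg hτ.1.le _
    have hb : 0 ≤ (t - τ) ^ (2*α - 2) := rpow_nonneg (sub_nonneg.2 hτ.2) _
    simp only [Pi.zero_apply]
    positivity
end
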